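/- arXiv:2501.13267 — 2 statements merged into one kernel-verified Lean document; each statement's English description precedes it below -/
import Mathlib

section
/- Let (d;a) = (d_1,…,d_c; a_0,…,a_n) be an h-regular pair with c ≤ 3, c ≤ n, and a_i ∤ h for every i = 0,…,n, where h is a positive integer. Then δ(d;a) ≥ F^h(a_0,…,a_n). -/
/-!
Write `A_m` and `D_m` for the sets of weights and degrees divisible by `m`. Then `h`-regularity says
`|A_m| ≤ |D_m|` for all `m ∤ h`, and the claim is that every multiple of `h` beyond the amplitude
is a nonnegative combination of the weights.

**Reduction to `h = 1`** (`cov_main`). A pair whose entries share a divisor `m > 1` of `h` can be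
divided by `m`. If `p ^ (s + 1) ∣ h`, multiplying by `p` all entries of `p`-adic valuation exactly `s`
preserves regularity and shrinks the semigroup; it does not increase the amplitude when at that level
the weights outweigh the degrees. If `m ∣ h` and `|A_m| > |D_m|`, one may pass to the pair
`(D_m; A_m)`, provided this does not increase the amplitude. When none of these moves is available,
the weights outside `A_q` weigh at most as much as the degrees outside `D_q` for all prime powers
`q ∣ h`, and the reverse strict inequality holds for all `m ∣ h`, `m ≠ 1` with `|A_m| > |D_m|`. With
at most three degrees the two are compatible only if there is no such `m`, that is, if the pair
is regular (`reg_one_of_balanced`).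

**Regular pairs** (`cov_one`). Consider a counterexample with least sum of degrees (`Minl`). No
weight equals a degree, each weight divides a degree, and dividing a degree by a prime must create a
violation, so it comes with a tight modulus, one with `|A_m| = |D_m|` (`exists_tight`).

* If all weights divide a single degree and none divides the other two, the tight moduli show that the
  weights failing to divide a given other degree at a given prime form an intersecting family of
  sets of size at most two covering `A`, hence a star. The two stars share an edge, and this
  yields a modulus dividing two weights but at most one degree (`Minl.not_single`).
* If `|A| > |D| + 1`, dropping the least weight `b` against dividing by primes the degrees that are at
  least `2 b` shows that each prime power exactly dividing `b` divides some degree below `2 b`; this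
  leaves only the previous configuration (`Minl.false_of_lt`).
* If `|A| = |D| + 1`, then outside that configuration all degrees but one, `d₀`, are matched
  injectively with weights dividing them (`Minl.false_of_eq`). Regularity makes
  `Q = ∏ [d_j] / ∏ [a_i]`, with `[x] = 1 + X + ⋯ + X ^ (x - 1)`, a polynomial, by comparing
  cyclotomic factors. Its degree is the amplitude plus one and `Q(1) > 0`, so the coefficients of
  `Q / (1 - X)` beyond the amplitude are positive. The matching writes `Q / (1 - X)` as
  `(1 - X ^ d₀) K` for a series `K` with nonnegative coefficients supported in the semigroup
  of the weights, so these exponents lie in the semigroup (`cov_of_matching`).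
-/

open Finset

/-- The amplitude `δ` of the (sub)pair given by the degrees `d` indexed by `D`
and the weights `a` indexed by `A`. -/
def deltaOn {ι κ : Type*} (D : Finset ι) (d : ι → ℕ) (A : Finset κ) (a : κ → ℕ) : ℤ :=
  (∑ j ∈ D, (d j : ℤ)) - ∑ i ∈ A, (a i : ℤ)

/-- The amplitude of a full pair `(d;a)`. -/
def deltaPair {ι κ : Type*} [Fintype ι] [Fintype κ] (d : ι → ℕ) (a : κ → ℕ) : ℤ :=
  deltaOn univ d univ a

/-- `h`-regularity of the (sub)pair given by the degrees `d` indexed by `D` and the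
weights `a` indexed by `A`: for every nonempty subset `I ⊆ A` of the weight indices with
`a_I := gcd_{i ∈ I} a i > 1`, either there are `|I|` pairwise distinct degree indices
`p ∈ D` with `a_I ∣ d p`, or `a_I ∣ h`. -/
def IsHRegularOn {ι κ : Type*} (h : ℕ) (D : Finset ι) (d : ι → ℕ)
    (A : Finset κ) (a : κ → ℕ) : Prop :=
  ∀ I : Finset κ, I ⊆ A → I.Nonempty → 1 < I.gcd a →
    (∃ P : Finset ι, P ⊆ D ∧ P.card = I.card ∧ ∀ j ∈ P, I.gcd a ∣ d j) ∨ I.gcd a ∣ h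

/-- `h`-regularity of a full pair `(d;a)`. -/
def IsHRegularPair {ι κ : Type*} [Fintype ι] [Fintype κ] (h : ℕ) (d : ι → ℕ)
    (a : κ → ℕ) : Prop :=
  IsHRegularOn h univ d univ a

/-- The generalised `1/h`-Frobenius number `F^h` of the weights indexed by `A`.
Letting `g` be the gcd of the weights, this is the largest integer `z` divisible by
`lcm g h` that is not a nonnegative integral combination of the weights; this agrees
with the renormalised definition `F^h = g * F^{h / gcd (g,h)} (a/g)`.  For `g = 1`
it is the largest multiple of `h` that is not a nonnegative integral combination of
the weights (so it equals `-h` if every positive multiple of `h` is such a combination),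
and `frobOn 1 A a` is the ordinary Frobenius number `F` (so `F = -1` if some weight
equals `1`). -/
noncomputable def frobOn {κ : Type*} (h : ℕ) (A : Finset κ) (a : κ → ℕ) : ℤ :=
  sSup {z : ℤ | ((Nat.lcm (A.gcd a) h : ℕ) : ℤ) ∣ z ∧
    ¬ ∃ x : κ → ℕ, ((∑ i ∈ A, x i * a i : ℕ) : ℤ) = z}

/-- The generalised `1/h`-Frobenius number `F^h` of a full tuple of weights. -/
noncomputable def frobNum {κ : Type*} [Fintype κ] (h : ℕ) (a : κ → ℕ) : ℤ :=
  frobOn h univ a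

namespace FrobBound

/-- The indices in `A` whose weight is divisible by `m`. -/
def divs {κ : Type*} (A : Finset κ) (a : κ → ℕ) (m : ℕ) : Finset κ :=
  A.filter (fun i => m ∣ a i)

/-- Counting form of `h`-regularity: a number that does not divide `h` divides at most as many
weights as degrees. -/
def Reg {ι κ : Type*} (h : ℕ) (D : Finset ι) (d : ι → ℕ) (A : Finset κ) (a : κ → ℕ) : Prop :=
  ∀ m : ℕ, ¬ m ∣ h → #(divs A a m) ≤ #(divs D d m)

/-- Every multiple of `h` exceeding `N` is a nonnegative combination of the weights in `A`. -/
def Cov {κ : Type*} (h : ℕ) (A : Finset κ) (a : κ → ℕ) (N : ℤ) : Prop :=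
  ∀ z : ℤ, (h : ℤ) ∣ z → N < z → ∃ x : κ → ℕ, ((∑ i ∈ A, x i * a i : ℕ) : ℤ) = z

theorem mem_divs {κ : Type*} {A : Finset κ} {a : κ → ℕ} {m : ℕ} {i : κ} :
    i ∈ divs A a m ↔ i ∈ A ∧ m ∣ a i := by simp [divs]

theorem divs_subset {κ : Type*} (A : Finset κ) (a : κ → ℕ) (m : ℕ) : divs A a m ⊆ A :=
  filter_subset _ _

/-! ### Geometric sums and cyclotomic polynomials -/

section Cyclotomic

open Polynomial

/-- The polynomial `1 + X + ⋯ + X ^ (x - 1)`. -/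
noncomputable def geo (x : ℕ) : ℤ[X] := ∑ i ∈ range x, X ^ i

theorem geo_eq_prod {x B : ℕ} (hx : 0 < x) (hB : x ≤ B) :
    geo x = ∏ m ∈ Icc 2 B, if m ∣ x then cyclotomic m ℤ else 1 := by
  rw [geo, ← prod_cyclotomic_eq_geom_sum hx, ← prod_filter]
  refine prod_congr ?_ fun _ _ => rfl
  ext m
  simp only [mem_erase, Nat.mem_divisors, mem_filter, mem_Icc]
  constructor
  · rintro ⟨h1, h2, -⟩
    have := Nat.pos_of_dvd_of_pos h2 hx
    have := Nat.le_of_dvd hx h2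
    exact ⟨⟨by omega, by omega⟩, h2⟩
  · rintro ⟨⟨h1, -⟩, h2⟩
    exact ⟨by omega, h2, by omega⟩

theorem prod_geo {κ : Type*} (A : Finset κ) (a : κ → ℕ) {B : ℕ} (ha : ∀ i ∈ A, 0 < a i)
    (hB : ∀ i ∈ A, a i ≤ B) :
    ∏ i ∈ A, geo (a i) = ∏ m ∈ Icc 2 B, cyclotomic m ℤ ^ #(divs A a m) := by
  rw [prod_congr rfl fun i hi => geo_eq_prod (ha i hi) (hB i hi), prod_comm]
  refine prod_congr rfl fun m _ => ?_
  rw [← prod_filter, prod_const]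
  rfl

/-- Regularity makes `∏ (1 + ⋯ + X ^ (a i - 1))` divide `∏ (1 + ⋯ + X ^ (d j - 1))`: the
cyclotomic factor of index `m` occurs at most as often in the former as in the latter. -/
theorem prod_geo_dvd {ι κ : Type*} {D : Finset ι} {d : ι → ℕ} {A : Finset κ} {a : κ → ℕ}
    (hd : ∀ j ∈ D, 0 < d j) (ha : ∀ i ∈ A, 0 < a i) (hreg : Reg 1 D d A a) :
    ∏ i ∈ A, geo (a i) ∣ ∏ j ∈ D, geo (d j) := by
  rw [prod_geo A a (B := ∑ i ∈ A, a i + ∑ j ∈ D, d j) ha,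
    prod_geo D d (B := ∑ i ∈ A, a i + ∑ j ∈ D, d j) hd]
  · refine prod_dvd_prod_of_dvd _ _ fun m hm => pow_dvd_pow _ (hreg m ?_)
    rw [mem_Icc] at hm
    rw [Nat.dvd_one]
    omega
  · intro j hj
    exact (single_le_sum (f := d) (fun _ _ => Nat.zero_le _) hj).trans (by omega)
  · intro j hj
    exact (single_le_sum (f := a) (fun _ _ => Nat.zero_le _) hj).trans (by omega)

theorem geo_eval_one (x : ℕ) : (geo x).eval 1 = x := by
  simp [geo, eval_finsetSum]

theorem geo_ne_zero {x : ℕ} (hx : 0 < x) : geo x ≠ 0 := by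
  intro h
  have := geo_eval_one x
  rw [h] at this
  simp at this
  omega

theorem natDegree_geo {x : ℕ} (hx : 0 < x) : (geo x).natDegree + 1 = x := by
  have h1 : geo x * (X - C 1) = X ^ x - 1 := by
    simpa [geo] using geom_sum_mul (X : ℤ[X]) x
  have h2 := congrArg natDegree h1
  rw [natDegree_mul (geo_ne_zero hx) (X_sub_C_ne_zero 1), natDegree_X_sub_C] at h2
  rw [h2]
  simpa using natDegree_X_pow_sub_C (n := x) (r := (1 : ℤ))

theorem natDegree_prod_geo {κ : Type*} (A : Finset κ) (a : κ → ℕ) (ha : ∀ i ∈ A, 0 < a i) :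
    (∏ i ∈ A, geo (a i)).natDegree + #A = ∑ i ∈ A, a i := by
  rw [natDegree_prod _ _ fun i hi => geo_ne_zero (ha i hi), card_eq_sum_ones, ← sum_add_distrib]
  exact sum_congr rfl fun i hi => natDegree_geo (ha i hi)

end Cyclotomic

/-! ### Semigroup generating series -/

section Series

open PowerSeries

/-- The numerical semigroup generated by the weights in `A`. -/
def semi {κ : Type*} (A : Finset κ) (a : κ → ℕ) : AddSubmonoid ℕ where
  carrier := {k | ∃ x : κ → ℕ, ∑ i ∈ A, x i * a i = k}
  zero_mem' := ⟨fun _ => 0, by simp⟩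
  add_mem' := by
    rintro _ _ ⟨x, rfl⟩ ⟨y, rfl⟩
    exact ⟨fun i => x i + y i, by simp [add_mul, sum_add_distrib]⟩

theorem mem_semi_of_dvd {κ : Type*} [DecidableEq κ] {A : Finset κ} {a : κ → ℕ} {i : κ}
    (hi : i ∈ A) {k : ℕ} (hk : a i ∣ k) : k ∈ semi A a := by
  obtain ⟨l, rfl⟩ := hk
  refine ⟨fun j => if j = i then l else 0, ?_⟩
  simp [hi, mul_comm]

/-- A power series with nonnegative coefficients supported in `S`. -/
def Good (S : AddSubmonoid ℕ) (F : ℤ⟦X⟧) : Prop :=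
  ∀ k, 0 ≤ coeff k F ∧ (coeff k F ≠ 0 → k ∈ S)

theorem Good.one (S : AddSubmonoid ℕ) : Good S 1 := by
  intro k
  rw [coeff_one]
  split_ifs with h
  · subst h; simp [S.zero_mem]
  · simp

theorem Good.mul {S : AddSubmonoid ℕ} {F G : ℤ⟦X⟧} (hF : Good S F) (hG : Good S G) :
    Good S (F * G) := by
  intro k
  rw [coeff_mul]
  refine ⟨sum_nonneg fun p _ => mul_nonneg (hF p.1).1 (hG p.2).1, fun h => ?_⟩
  obtain ⟨p, hp, hne⟩ := exists_ne_zero_of_sum_ne_zero h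
  rw [← mem_antidiagonal.mp hp]
  exact S.add_mem ((hF p.1).2 (left_ne_zero_of_mul hne)) ((hG p.2).2 (right_ne_zero_of_mul hne))

theorem Good.prod {S : AddSubmonoid ℕ} {κ : Type*} (A : Finset κ) (F : κ → ℤ⟦X⟧)
    (hF : ∀ i ∈ A, Good S (F i)) : Good S (∏ i ∈ A, F i) :=
  prod_induction _ (Good S) (fun _ _ => Good.mul) (Good.one S) hF

/-- The series `∑ X ^ (x * l)`, the inverse of `1 - X ^ x`. -/
noncomputable def ginv (x : ℕ) : ℤ⟦X⟧ := PowerSeries.mk fun n => if x ∣ n then 1 else 0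

theorem ginv_mul {x : ℕ} (hx : 0 < x) : ginv x * (1 - X ^ x) = 1 := by
  ext n
  rw [mul_sub, mul_one, map_sub, coeff_mul_X_pow', coeff_one, ginv, coeff_mk, coeff_mk]
  by_cases hn : n = 0
  · subst hn
    simp [hx.ne']
  · rw [if_neg hn]
    by_cases hxn : x ≤ n
    · have : x ∣ n ∨ n ≤ x ↔ x ∣ n :=
        ⟨fun h => h.elim id fun h => dvd_of_eq (le_antisymm hxn h), Or.inl⟩
      simp [hxn, Nat.dvd_sub_self_right, this]
    · have : ¬ x ∣ n := fun h => hxn (Nat.le_of_dvd (Nat.pos_of_ne_zero hn) h)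
      simp [hxn, this]

theorem ginv_good {S : AddSubmonoid ℕ} {x : ℕ} (hx : ∀ k, x ∣ k → k ∈ S) : Good S (ginv x) := by
  intro k
  rw [ginv, coeff_mk]
  split_ifs with h
  · simp [hx k h]
  · simp

theorem pow_sum_good {S : AddSubmonoid ℕ} {x : ℕ} (hx : ∀ k, x ∣ k → k ∈ S) (r : ℕ) :
    Good S (∑ l ∈ range r, (X ^ x) ^ l) := by
  intro k
  simp only [map_sum, ← pow_mul, coeff_X_pow]
  refine ⟨sum_nonneg fun _ _ => by split_ifs <;> simp, fun h => ?_⟩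
  obtain ⟨l, -, hl⟩ := exists_ne_zero_of_sum_ne_zero h
  apply hx
  by_contra hk
  apply hl
  rw [if_neg]
  rintro rfl
  exact hk (Dvd.intro _ rfl)

theorem one_sub_X_pow (x : ℕ) : (1 - X ^ x : ℤ⟦X⟧) = (1 - X) * (geo x : ℤ⟦X⟧) := by
  have h := geom_sum_mul_neg (X : ℤ⟦X⟧) x
  rw [← h, mul_comm]
  congr 1
  rw [geo, ← Polynomial.coeToPowerSeries.ringHom_apply, map_sum]
  simp

/-- If `|A| = |D| + 1` and all degrees but one can be matched injectively with weights dividing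
them, then every integer beyond the amplitude is representable. -/
theorem cov_of_matching {ι κ : Type*} [DecidableEq ι] [DecidableEq κ] {D : Finset ι} {d : ι → ℕ}
    {A : Finset κ} {a : κ → ℕ} (hd : ∀ j ∈ D, 0 < d j) (ha : ∀ i ∈ A, 0 < a i)
    (hreg : Reg 1 D d A a) (hcard : #A = #D + 1) {j₀ : ι} (hj₀ : j₀ ∈ D) (f : ι → κ)
    (hfA : ∀ j ∈ D.erase j₀, f j ∈ A) (hfd : ∀ j ∈ D.erase j₀, a (f j) ∣ d j)
    (hinj : Set.InjOn f (D.erase j₀ : Finset ι)) :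
    Cov 1 A a (deltaOn D d A a) := by
  obtain ⟨Q, hQ⟩ := prod_geo_dvd hd ha hreg
  have hPA : ∏ i ∈ A, geo (a i) ≠ 0 := prod_ne_zero_iff.mpr fun i hi => geo_ne_zero (ha i hi)
  have hPD : ∏ j ∈ D, geo (d j) ≠ 0 := prod_ne_zero_iff.mpr fun i hi => geo_ne_zero (hd i hi)
  have hQ0 : Q ≠ 0 := by
    rintro rfl
    exact hPD (by rw [hQ, mul_zero])
  have hQ1 : 0 < Q.eval 1 := by
    have h := congrArg (Polynomial.eval 1) hQ
    rw [Polynomial.eval_mul, Polynomial.eval_prod, Polynomial.eval_prod] at h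
    simp only [geo_eval_one] at h
    have h1 : (0 : ℤ) < ∏ i ∈ A, (a i : ℤ) := prod_pos fun i hi => by exact_mod_cast ha i hi
    have h2 : (0 : ℤ) < ∏ j ∈ D, (d j : ℤ) := prod_pos fun i hi => by exact_mod_cast hd i hi
    rw [h] at h2
    exact (pos_iff_pos_of_mul_pos h2).mp h1
  have hdeg : (Q.natDegree : ℤ) = deltaOn D d A a + 1 := by
    have h1 := natDegree_prod_geo A a ha
    have h2 := natDegree_prod_geo D d hd
    rw [hQ, Polynomial.natDegree_mul hPA hQ0] at h2
    rw [deltaOn]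
    zify at h1 h2 hcard
    linarith
  set E := D.erase j₀ with hE
  set S := semi A a with hS
  let R : ι → ℤ⟦X⟧ := fun j => ∑ l ∈ range (d j / a (f j)), (X ^ a (f j)) ^ l
  let K : ℤ⟦X⟧ := (∏ j ∈ E, R j) * ∏ i ∈ A \ E.image f, ginv (a i)
  let H : ℤ⟦X⟧ := (1 - X ^ d j₀) * K
  have hsub : E.image f ⊆ A := by
    intro i hi
    obtain ⟨j, hj, rfl⟩ := mem_image.mp hi
    exact hfA j hj
  have hKgood : Good S K := by
    refine Good.mul (Good.prod _ _ fun j hj => ?_) (Good.prod _ _ fun i hi => ?_)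
    · exact pow_sum_good (fun k hk => mem_semi_of_dvd (hfA j hj) hk) _
    · exact ginv_good fun k hk => mem_semi_of_dvd (mem_sdiff.mp hi).1 hk
  have hH : H * ∏ i ∈ A, (1 - X ^ a i : ℤ⟦X⟧) = ∏ j ∈ D, (1 - X ^ d j : ℤ⟦X⟧) := by
    rw [← prod_sdiff hsub, prod_image hinj, ← mul_prod_erase D _ hj₀]
    have e1 : (∏ j ∈ E, R j) * ∏ j ∈ E, (1 - X ^ a (f j) : ℤ⟦X⟧) = ∏ j ∈ E, (1 - X ^ d j) := by
      rw [← prod_mul_distrib]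
      refine prod_congr rfl fun j hj => ?_
      rw [geom_sum_mul_neg, ← pow_mul, Nat.mul_div_cancel' (hfd j hj)]
    have e2 : (∏ i ∈ A \ E.image f, ginv (a i)) * ∏ i ∈ A \ E.image f, (1 - X ^ a i : ℤ⟦X⟧) = 1 := by
      rw [← prod_mul_distrib]
      exact prod_eq_one fun i hi => ginv_mul (ha i (mem_sdiff.mp hi).1)
    calc _ = (1 - X ^ d j₀) * ((∏ j ∈ E, R j) * ∏ j ∈ E, (1 - X ^ a (f j) : ℤ⟦X⟧)) *
          ((∏ i ∈ A \ E.image f, ginv (a i)) * ∏ i ∈ A \ E.image f, (1 - X ^ a i : ℤ⟦X⟧)) := by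
          simp only [H, K]; ring
      _ = _ := by rw [e1, e2, mul_one]
  have h1X : (1 - X : ℤ⟦X⟧) ≠ 0 := by
    intro h
    have := mk_one_mul_one_sub_eq_one ℤ
    rw [h, mul_zero] at this
    exact zero_ne_one this
  have hHQ : H * (1 - X) = (Q : ℤ⟦X⟧) := by
    have hPA' : ((∏ i ∈ A, geo (a i) : Polynomial ℤ) : ℤ⟦X⟧) ≠ 0 := by
      rw [Ne, Polynomial.coe_eq_zero_iff]
      exact hPA
    have c1 : ∀ (T : Finset ι) (t : ι → ℕ), ∏ j ∈ T, (1 - X ^ t j : ℤ⟦X⟧) =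
        (1 - X) ^ #T * ((∏ j ∈ T, geo (t j) : Polynomial ℤ) : ℤ⟦X⟧) := by
      intro T t
      rw [prod_congr rfl fun j _ => one_sub_X_pow (t j), prod_mul_distrib, prod_const,
        ← Polynomial.coeToPowerSeries.ringHom_apply, map_prod]
      simp
    have c2 : ∀ (T : Finset κ) (t : κ → ℕ), ∏ j ∈ T, (1 - X ^ t j : ℤ⟦X⟧) =
        (1 - X) ^ #T * ((∏ j ∈ T, geo (t j) : Polynomial ℤ) : ℤ⟦X⟧) := by
      intro T t
      rw [prod_congr rfl fun j _ => one_sub_X_pow (t j), prod_mul_distrib, prod_const,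
        ← Polynomial.coeToPowerSeries.ringHom_apply, map_prod]
      simp
    rw [c1, c2, hQ, Polynomial.coe_mul, hcard] at hH
    refine mul_right_cancel₀ (mul_ne_zero (pow_ne_zero #D h1X) hPA') ?_
    linear_combination hH
  have hHk : ∀ k, Q.natDegree ≤ k → coeff k H = Q.eval 1 := by
    intro k hk
    have : H = (Q : ℤ⟦X⟧) * PowerSeries.mk 1 := by
      rw [← hHQ, mul_assoc, mul_comm (1 - X), mk_one_mul_one_sub_eq_one, mul_one]
    rw [this, coeff_mul, Nat.sum_antidiagonal_eq_sum_range_succ_mk,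
      Polynomial.eval_eq_sum_range' (Nat.lt_succ_of_le hk)]
    simp
  intro z _ hz
  have hz0 : 0 ≤ z := by
    have : (0 : ℤ) ≤ Q.natDegree := by positivity
    omega
  lift z to ℕ using hz0
  have hk : Q.natDegree ≤ z := by omega
  have h1 := hHk z hk
  have h2 : coeff z H ≤ coeff z K := by
    simp only [H]
    rw [sub_mul, one_mul, map_sub, coeff_X_pow_mul']
    split_ifs
    · linarith [(hKgood (z - d j₀)).1]
    · simp
  obtain ⟨x, hx⟩ := (hKgood z).2 (by omega)
  exact ⟨x, by exact_mod_cast hx⟩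

end Series

/-! ### Divisibility preliminaries -/

theorem pow_dvd_lcm {p k x y : ℕ} (hp : p.Prime) (h : p ^ k ∣ Nat.lcm x y) :
    p ^ k ∣ x ∨ p ^ k ∣ y := by
  rcases Nat.eq_zero_or_pos x with rfl | hx
  · exact Or.inl (dvd_zero _)
  rcases Nat.eq_zero_or_pos y with rfl | hy
  · exact Or.inr (dvd_zero _)
  rw [hp.pow_dvd_iff_le_factorization (Nat.lcm_ne_zero hx.ne' hy.ne'),
    Nat.factorization_lcm hx.ne' hy.ne', Finsupp.sup_apply, le_sup_iff] at h
  rwa [hp.pow_dvd_iff_le_factorization hx.ne', hp.pow_dvd_iff_le_factorization hy.ne']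

theorem pow_dvd_finset_lcm {κ : Type*} [DecidableEq κ] {p k : ℕ} (hp : p.Prime) {C : Finset κ}
    {a : κ → ℕ} (hk : k ≠ 0) (h : p ^ k ∣ C.lcm a) : ∃ i ∈ C, p ^ k ∣ a i := by
  induction C using Finset.induction_on with
  | empty =>
    rw [lcm_empty, Nat.dvd_one, Nat.pow_eq_one] at h
    exact absurd h (by simp [hp.one_lt.ne', hk])
  | insert i s _ ih =>
    rw [lcm_insert] at h
    rcases pow_dvd_lcm hp h with h | h
    · exact ⟨i, mem_insert_self _ _, h⟩
    · obtain ⟨j, hj, hjd⟩ := ih h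
      exact ⟨j, mem_insert_of_mem hj, hjd⟩

theorem dvd_of_pp {n m : ℕ} (h : ∀ p k, p.Prime → p ^ k ∣ n → p ^ k ∣ m) : n ∣ m :=
  (Nat.dvd_iff_prime_pow_dvd_dvd m n).mpr h

/-- A divisor of `x` that no longer divides `x / p` contains the full power of `p` in `x`. -/
theorem ordProj_dvd_of_not_dvd_div {p x m : ℕ} (hp : p.Prime) (hx : 0 < x) (hpx : p ∣ x)
    (hm : m ∣ x) (hmp : ¬ m ∣ x / p) : p ^ x.factorization p ∣ m := by
  by_contra hv
  refine hmp (dvd_of_pp fun r k hr hrk => ?_)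
  obtain ⟨e, rfl⟩ := hpx
  rw [Nat.mul_div_cancel_left _ hp.pos]
  have he : e ≠ 0 := by rintro rfl; simp at hx
  have hrx : r ^ k ∣ p * e := hrk.trans hm
  by_cases hrp : r = p
  · subst hrp
    rw [hr.pow_dvd_iff_le_factorization he]
    rw [Nat.factorization_mul hr.ne_zero he, Finsupp.add_apply, hr.factorization_self] at hv
    by_contra hlt
    exact hv ((pow_dvd_pow r (by omega)).trans hrk)
  · exact (((Nat.coprime_primes hr hp).mpr hrp).pow_left k).dvd_of_dvd_mul_left hrx

/-! ### Operations on pairs -/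

theorem Cov.mono {κ : Type*} [DecidableEq κ] {h : ℕ} {A A' : Finset κ} {a : κ → ℕ} {N N' : ℤ}
    (hA : A' ⊆ A) (hN : N' ≤ N) (hc : Cov h A' a N') : Cov h A a N := by
  intro z hz hNz
  obtain ⟨x, hx⟩ := hc z hz (lt_of_le_of_lt hN hNz)
  refine ⟨fun i => if i ∈ A' then x i else 0, ?_⟩
  rw [← hx]
  congr 1
  simp only [ite_mul, zero_mul]
  rw [← sum_filter, filter_mem_eq_inter, inter_eq_right.mpr hA]

theorem Reg.mono {ι κ : Type*} {h : ℕ} {D : Finset ι} {d : ι → ℕ} {A A' : Finset κ} {a : κ → ℕ}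
    (hA : A' ⊆ A) (hr : Reg h D d A a) : Reg h D d A' a := fun m hm =>
  (card_le_card (filter_subset_filter _ hA)).trans (hr m hm)

theorem divs_lcm {κ : Type*} [DecidableEq κ] (A : Finset κ) (a : κ → ℕ) (m m' : ℕ) :
    divs A a (m.lcm m') = divs A a m ∩ divs A a m' := by
  ext i
  simp only [mem_divs, mem_inter, Nat.lcm_dvd_iff]
  tauto

theorem divs_anti {κ : Type*} (A : Finset κ) (a : κ → ℕ) {m m' : ℕ} (h : m ∣ m') :
    divs A a m' ⊆ divs A a m := by
  intro i hi
  rw [mem_divs] at hi ⊢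
  exact ⟨hi.1, h.trans hi.2⟩

theorem sum_update_add {ι : Type*} [DecidableEq ι] {D : Finset ι} (d : ι → ℕ) {j : ι} (hj : j ∈ D)
    (x : ℕ) : ∑ k ∈ D, Function.update d j x k + d j = ∑ k ∈ D, d k + x := by
  rw [sum_update_of_mem hj, ← add_sum_erase D d hj, sdiff_singleton_eq_erase]
  ring

/-- If dividing the degree `d j` by a prime `p` destroys regularity, some tight modulus `m` dividing
`d j` contains the full power of `p` in `d j`. -/
theorem exists_tight {ι κ : Type*} [DecidableEq ι] {D : Finset ι} {d : ι → ℕ} {A : Finset κ}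
    {a : κ → ℕ} (hr : Reg 1 D d A a) {j : ι} (hj : j ∈ D) (hdj : 0 < d j) {p : ℕ} (hp : p.Prime)
    (hpj : p ∣ d j) (hn : ¬ Reg 1 D (Function.update d j (d j / p)) A a) :
    ∃ m, ¬ m ∣ 1 ∧ m ∣ d j ∧ p ^ (d j).factorization p ∣ m ∧ #(divs A a m) = #(divs D d m) := by
  simp only [Reg, not_forall, not_le] at hn
  obtain ⟨m, hm1, hm⟩ := hn
  have hA := hr m hm1
  have key : m ∣ d j ∧ ¬ m ∣ d j / p := by
    by_contra hcon
    have hiff : m ∣ d j ↔ m ∣ d j / p :=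
      ⟨fun h => by tauto, fun h => h.trans (Nat.div_dvd_of_dvd hpj)⟩
    have : divs D (Function.update d j (d j / p)) m = divs D d m := by
      ext k
      rw [mem_divs, mem_divs]
      by_cases hk : k = j
      · subst hk; rw [Function.update_self, hiff]
      · rw [Function.update_of_ne hk]
    rw [this] at hm
    omega
  have hD : divs D (Function.update d j (d j / p)) m = (divs D d m).erase j := by
    ext k
    rw [mem_erase, mem_divs, mem_divs]
    by_cases hk : k = j
    · subst hk; simp [key.2]
    · simp [hk]
  rw [hD, card_erase_of_mem (mem_divs.mpr ⟨hj, key.1⟩)] at hm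
  exact ⟨m, hm1, key.1, ordProj_dvd_of_not_dvd_div hp hdj hpj key.1 key.2, by omega⟩

/-! ### Small set systems -/

/-- Sets `U j ∋ j` inside a set `J` of at most three points cannot be mirrored, with equal sizes and no
larger pairwise intersections, by sets `T j` inside a smaller set `W`: no two of the `U j` may cover
`J`, so for `|J| = 3` they are singletons and the `T j` are three disjoint singletons in `W`. -/
theorem no_system {ι κ : Type*} [DecidableEq ι] [DecidableEq κ] {J : Finset ι} {W : Finset κ}
    (hJ : #J ≤ 3) (hW : #W < #J) (U : ι → Finset ι) (T : ι → Finset κ)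
    (hjU : ∀ j ∈ J, j ∈ U j) (hUJ : ∀ j ∈ J, U j ⊆ J) (hTW : ∀ j ∈ J, T j ⊆ W)
    (hc : ∀ j ∈ J, #(T j) = #(U j)) (hi : ∀ j ∈ J, ∀ k ∈ J, #(T j ∩ T k) ≤ #(U j ∩ U k)) :
    False := by
  have hun : ∀ j ∈ J, ∀ k ∈ J, ¬ J ⊆ U j ∪ U k := by
    intro j hj k hk hsub
    have h1 := card_union_add_card_inter (T j) (T k)
    have h2 := card_union_add_card_inter (U j) (U k)
    have h3 := hi j hj k hk
    have h4 := hc j hj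
    have h5 := hc k hk
    have h6 := card_le_card (union_subset (hTW j hj) (hTW k hk))
    have h7 := card_le_card hsub
    omega
  have hJ0 : #J ≠ 0 := by omega
  interval_cases hJc : #J
  · exact hJ0 rfl
  · obtain ⟨x, rfl⟩ := card_eq_one.mp hJc
    exact hun x (by simp) x (by simp) (by simpa using hjU x (by simp))
  · obtain ⟨x, y, -, rfl⟩ := card_eq_two.mp hJc
    refine hun x (by simp) y (by simp) ?_
    have := hjU x (by simp)
    have := hjU y (by simp)
    intro t ht
    simp only [mem_insert, mem_singleton] at ht
    rcases ht with rfl | rfl <;> simp_all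
  · obtain ⟨x, y, z, hxy, hxz, hyz, rfl⟩ := card_eq_three.mp hJc
    have hx := hjU x (by simp)
    have hy := hjU y (by simp)
    have hz := hjU z (by simp)
    have gxy : z ∉ U x ∧ z ∉ U y := by
      have := hun x (by simp) y (by simp)
      constructor <;> intro hh <;> apply this <;> intro t ht <;>
        simp only [mem_insert, mem_singleton] at ht <;> rcases ht with rfl | rfl | rfl <;> simp [*]
    have gxz : y ∉ U x ∧ y ∉ U z := by
      have := hun x (by simp) z (by simp)
      constructor <;> intro hh <;> apply this <;> intro t ht <;>
        simp only [mem_insert, mem_singleton] at ht <;> rcases ht with rfl | rfl | rfl <;> simp [*]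
    have gyz : x ∉ U y ∧ x ∉ U z := by
      have := hun y (by simp) z (by simp)
      constructor <;> intro hh <;> apply this <;> intro t ht <;>
        simp only [mem_insert, mem_singleton] at ht <;> rcases ht with rfl | rfl | rfl <;> simp [*]
    have ux : U x = {x} := by
      ext t; have := @hUJ x (by simp) t; simp only [mem_insert, mem_singleton] at this ⊢; grind
    have uy : U y = {y} := by
      ext t; have := @hUJ y (by simp) t; simp only [mem_insert, mem_singleton] at this ⊢; grind
    have uz : U z = {z} := by
      ext t; have := @hUJ z (by simp) t; simp only [mem_insert, mem_singleton] at this ⊢; grind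
    have cx := hc x (by simp)
    have cy := hc y (by simp)
    have cz := hc z (by simp)
    have ixy := hi x (by simp) y (by simp)
    have ixz := hi x (by simp) z (by simp)
    have iyz := hi y (by simp) z (by simp)
    rw [ux, uy] at ixy
    rw [ux, uz] at ixz
    rw [uy, uz] at iyz
    rw [ux] at cx
    rw [uy] at cy
    rw [uz] at cz
    simp only [card_singleton] at cx cy cz
    rw [singleton_inter_of_notMem (by simpa using hxy), card_empty, Nat.le_zero, card_eq_zero,
      ← disjoint_iff_inter_eq_empty] at ixy
    rw [singleton_inter_of_notMem (by simpa using hxz), card_empty, Nat.le_zero, card_eq_zero,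
      ← disjoint_iff_inter_eq_empty] at ixz
    rw [singleton_inter_of_notMem (by simpa using hyz), card_empty, Nat.le_zero, card_eq_zero,
      ← disjoint_iff_inter_eq_empty] at iyz
    have hun3 := card_le_card (union_subset (union_subset (hTW x (by simp)) (hTW y (by simp)))
      (hTW z (by simp)))
    rw [card_union_of_disjoint (disjoint_union_left.mpr ⟨ixz, iyz⟩),
      card_union_of_disjoint ixy] at hun3
    omega

/-- An intersecting family of sets of size at most two that covers at least four points is a star. -/
theorem exists_star {σ κ : Type*} [DecidableEq κ] {A : Finset κ} (hA : 4 ≤ #A) (E : Set σ)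
    (B : σ → Finset κ) (hB2 : ∀ p ∈ E, #(B p) ≤ 2) (hcov : ∀ i ∈ A, ∃ p ∈ E, i ∈ B p)
    (hBA : ∀ p ∈ E, B p ⊆ A)
    (hmeet : ∀ p ∈ E, ∀ q ∈ E, ∃ i ∈ B p, i ∈ B q) :
    ∃ z ∈ A, ∀ i ∈ A, i ≠ z → ∃ p ∈ E, B p = {z, i} := by
  obtain ⟨z, hzA, hz⟩ : ∃ z ∈ A, ∀ p ∈ E, z ∈ B p := by
    obtain ⟨i₀, hi₀⟩ := card_pos.mp (show 0 < #A by omega)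
    obtain ⟨p₀, hp₀, hi₀p⟩ := hcov i₀ hi₀
    obtain ⟨x, y, hxy⟩ : ∃ x y, B p₀ = {x, y} := by
      have h1 := card_pos.mpr ⟨i₀, hi₀p⟩
      have h2 := hB2 p₀ hp₀
      obtain h | h : #(B p₀) = 1 ∨ #(B p₀) = 2 := by omega
      · obtain ⟨x, hx⟩ := card_eq_one.mp h
        exact ⟨x, x, by simpa using hx⟩
      · obtain ⟨x, y, -, hx⟩ := card_eq_two.mp h
        exact ⟨x, y, hx⟩
    obtain ⟨w, hwA, hw⟩ : ∃ w ∈ A, w ∉ ({x, y} : Finset κ) :=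
      exists_mem_notMem_of_card_lt_card (by have := card_le_two (a := x) (b := y); omega)
    obtain ⟨p₁, hp₁, hwp⟩ := hcov w hwA
    obtain ⟨s, hs0, hs1⟩ := hmeet p₀ hp₀ p₁ hp₁
    -- The centre is the common point of the first two sets.
    obtain ⟨t, hst⟩ : ∃ t, B p₀ = {s, t} := by
      rw [hxy] at hs0
      simp only [mem_insert, mem_singleton] at hs0
      rcases hs0 with rfl | rfl
      · exact ⟨y, hxy⟩
      · exact ⟨x, by rw [hxy, pair_comm]⟩
    rw [← hxy, hst] at hw
    simp only [mem_insert, mem_singleton, not_or] at hw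
    have hB1 : B p₁ = {s, w} := by
      refine (eq_of_subset_of_card_le ?_ ?_).symm
      · intro u hu
        simp only [mem_insert, mem_singleton] at hu
        rcases hu with rfl | rfl <;> assumption
      · rw [card_pair (Ne.symm hw.1)]
        exact hB2 p₁ hp₁
    obtain ⟨v, hvA, hv⟩ : ∃ v ∈ A, v ∉ ({s, t, w} : Finset κ) :=
      exists_mem_notMem_of_card_lt_card
        (by have := card_le_three (a := s) (b := t) (c := w); omega)
    simp only [mem_insert, mem_singleton, not_or] at hv
    have key : ∀ p ∈ E, s ∉ B p → t ∈ B p ∧ w ∈ B p := by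
      intro p hp hs
      obtain ⟨i, hi, hip⟩ := hmeet p₀ hp₀ p hp
      obtain ⟨i', hi', hip'⟩ := hmeet p₁ hp₁ p hp
      rw [hst] at hi
      rw [hB1] at hi'
      simp only [mem_insert, mem_singleton] at hi hi'
      constructor
      · rcases hi with rfl | rfl
        · exact absurd hip hs
        · exact hip
      · rcases hi' with rfl | rfl
        · exact absurd hip' hs
        · exact hip'
    have three : ∀ p ∈ E, v ∈ B p → t ∈ B p → w ∈ B p → False := by
      intro p hp h1 h2 h3
      have hsub : ({v, t, w} : Finset κ) ⊆ B p := by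
        intro u hu
        simp only [mem_insert, mem_singleton] at hu
        rcases hu with rfl | rfl | rfl <;> assumption
      have := card_le_card hsub
      rw [card_eq_three.mpr ⟨v, t, w, hv.2.1, hv.2.2, Ne.symm hw.2, rfl⟩] at this
      have := hB2 p hp
      omega
    obtain ⟨p₂, hp₂, hvp⟩ := hcov v hvA
    have hs2 : s ∈ B p₂ := by
      by_contra hs
      exact three p₂ hp₂ hvp (key p₂ hp₂ hs).1 (key p₂ hp₂ hs).2
    have hB2' : B p₂ = {s, v} := by
      refine (eq_of_subset_of_card_le ?_ ?_).symm
      · intro u hu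
        simp only [mem_insert, mem_singleton] at hu
        rcases hu with rfl | rfl <;> assumption
      · rw [card_pair (Ne.symm hv.1)]
        exact hB2 p₂ hp₂
    refine ⟨s, hBA p₁ hp₁ hs1, fun p hp => ?_⟩
    by_contra hs
    obtain ⟨i, hi, hip⟩ := hmeet p₂ hp₂ p hp
    rw [hB2'] at hi
    simp only [mem_insert, mem_singleton] at hi
    rcases hi with rfl | rfl
    · exact hs hip
    · exact three p hp hip (key p hp hs).1 (key p hp hs).2
  refine ⟨z, hzA, fun i hi hiz => ?_⟩
  obtain ⟨p, hp, hip⟩ := hcov i hi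
  refine ⟨p, hp, (eq_of_subset_of_card_le ?_ ?_).symm⟩
  · intro u hu
    simp only [mem_insert, mem_singleton] at hu
    rcases hu with rfl | rfl
    · exact hz p hp
    · exact hip
  · rw [card_pair (Ne.symm hiz)]
    exact hB2 p hp

/-! ### Minimal counterexamples for regular pairs -/

/-- The properties of a regular pair with `|D| ≤ 3` that violates the bound and has the least
possible sum of degrees. -/
structure Minl {ι κ : Type*} [DecidableEq κ] (D : Finset ι) (d : ι → ℕ) (A : Finset κ)
    (a : κ → ℕ) : Prop where
  hd : ∀ j ∈ D, 0 < d j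
  ha : ∀ i ∈ A, 2 ≤ a i
  reg : Reg 1 D d A a
  card : #D < #A
  card3 : #D ≤ 3
  ncov : ¬ Cov 1 A a (deltaOn D d A a)
  /-- no degree equals a weight -/
  hne : ∀ j ∈ D, ∀ i ∈ A, d j ≠ a i
  /-- the degrees cannot be lowered -/
  low : ∀ d' : ι → ℕ, (∀ j ∈ D, 0 < d' j) → Reg 1 D d' A a → ∑ j ∈ D, d j ≤ ∑ j ∈ D, d' j
  /-- a surplus weight cannot be dropped against a lowering of the degrees -/
  drop : #D + 1 < #A → ∀ b ∈ A, ∀ d' : ι → ℕ, (∀ j ∈ D, 0 < d' j) → Reg 1 D d' (A.erase b) a →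
    ∑ j ∈ D, d j < ∑ j ∈ D, d' j + a b

section

variable {ι κ : Type*} [DecidableEq κ] {D : Finset ι} {d : ι → ℕ} {A : Finset κ}
  {a : κ → ℕ}

theorem Minl.exists_dvd (H : Minl D d A a) {i : κ} (hi : i ∈ A) : ∃ j ∈ D, a i ∣ d j := by
  have h := H.reg (a i) (by have := H.ha i hi; rw [Nat.dvd_one]; omega)
  have h1 : 0 < #(divs A a (a i)) := card_pos.mpr ⟨i, mem_divs.mpr ⟨hi, dvd_rfl⟩⟩
  obtain ⟨j, hj⟩ := card_pos.mp (lt_of_lt_of_le h1 h)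
  exact ⟨j, mem_divs.mp hj⟩

theorem Minl.two_mul_le (H : Minl D d A a) {i : κ} (hi : i ∈ A) {j : ι} (hj : j ∈ D)
    (hij : a i ∣ d j) : 2 * a i ≤ d j := by
  obtain ⟨e, he⟩ := hij
  have h0 := H.hd j hj
  have h1 := H.hne j hj i hi
  rw [he] at h0 h1 ⊢
  have : e ≠ 0 := by rintro rfl; simp at h0
  have : e ≠ 1 := by rintro rfl; simp at h1
  rw [mul_comm]
  exact Nat.mul_le_mul_left _ (by omega)

variable [DecidableEq ι]

/-- Dividing a degree by a prime destroys the regularity of a minimal counterexample. -/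
theorem Minl.tight (H : Minl D d A a) {j : ι} (hj : j ∈ D) {p : ℕ} (hp : p.Prime) (hpj : p ∣ d j) :
    ∃ m, ¬ m ∣ 1 ∧ m ∣ d j ∧ p ^ (d j).factorization p ∣ m ∧ #(divs A a m) = #(divs D d m) := by
  refine exists_tight H.reg hj (H.hd j hj) hp hpj fun hr => ?_
  have hlt : d j / p < d j := Nat.div_lt_self (H.hd j hj) hp.one_lt
  have h := H.low _ (fun k hk => ?_) hr
  · have := sum_update_add d hj (d j / p)
    omega
  · by_cases hkj : k = j
    · subst hkj
      rw [Function.update_self]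
      exact Nat.div_pos (Nat.le_of_dvd (H.hd k hk) hpj) hp.pos
    · rw [Function.update_of_ne hkj]
      exact H.hd k hk

/-- If all weights divide `d j₁`, then so do all degrees. -/
theorem Minl.degree_dvd (H : Minl D d A a) {j₁ : ι} (hall : ∀ i ∈ A, a i ∣ d j₁) {y : ι}
    (hy : y ∈ D) : d y ∣ d j₁ := by
  refine dvd_of_pp fun p k hp hk => ?_
  rcases Nat.eq_zero_or_pos k with rfl | hk0
  · simp
  have hpy : p ∣ d y := (dvd_pow_self p hk0.ne').trans hk
  obtain ⟨m, -, hmy, hpm, hcard⟩ := H.tight hy hp hpy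
  have h1 : 0 < #(divs A a m) := by
    rw [hcard]
    exact card_pos.mpr ⟨y, mem_divs.mpr ⟨hy, hmy⟩⟩
  obtain ⟨i, hi⟩ := card_pos.mp h1
  rw [mem_divs] at hi
  have hkv := (hp.pow_dvd_iff_le_factorization (H.hd y hy).ne').mp hk
  exact (pow_dvd_pow p hkv).trans (hpm.trans (hi.2.trans (hall i hi.1)))

/-- Moving the prime `p` from `d j₁` to `d y` (replacing `d y` by the least common multiple of `d y`
and of the weights carrying the full power of `p` in `d j₁`) preserves regularity. Minimality of
the degree sum then forces that least common multiple to be `d j₁` itself. -/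
theorem Minl.lcm_eq (H : Minl D d A a) {j₁ y : ι} (hj₁ : j₁ ∈ D) (hy : y ∈ D) (hne : y ≠ j₁)
    (hall : ∀ i ∈ A, a i ∣ d j₁) {p : ℕ} (hp : p.Prime)
    (hpy : ¬ p ^ (d j₁).factorization p ∣ d y) :
    (d y).lcm ((divs A a (p ^ (d j₁).factorization p)).lcm a) = d j₁ := by
  set f := (d j₁).factorization p with hf
  set L := (d y).lcm ((divs A a (p ^ f)).lcm a) with hL
  have hLd : L ∣ d j₁ := Nat.lcm_dvd (H.degree_dvd hall hy)
    (Finset.lcm_dvd fun i hi => hall i (mem_divs.mp hi).1)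
  by_contra hLne
  have hd1 := H.hd j₁ hj₁
  have hdy := H.hd y hy
  have hL0 : 0 < L := Nat.pos_of_dvd_of_pos hLd hd1
  have hpd : p ∣ d j₁ := by
    by_contra hn
    apply hpy
    rw [hf, Nat.factorization_eq_zero_of_not_dvd hn, pow_zero]
    exact one_dvd _
  have h2L : 2 * L ≤ d j₁ := by
    obtain ⟨e, he⟩ := hLd
    rw [he] at hd1 hLne ⊢
    have : e ≠ 0 := by rintro rfl; simp at hd1
    have : e ≠ 1 := by rintro rfl; simp at hLne
    rw [mul_comm]
    exact Nat.mul_le_mul_left _ (by omega)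
  have h2d : 2 * (d j₁ / p) ≤ d j₁ :=
    (Nat.mul_le_mul_right _ hp.two_le).trans (Nat.mul_div_le _ _)
  have hdp : 0 < d j₁ / p := Nat.div_pos (Nat.le_of_dvd hd1 hpd) hp.pos
  set d' := Function.update (Function.update d j₁ (d j₁ / p)) y L with hd'
  have dy : d' y = L := by simp [hd']
  have d1 : d' j₁ = d j₁ / p := by simp [hd', Function.update_of_ne hne.symm]
  have dk : ∀ k, k ≠ y → k ≠ j₁ → d' k = d k := fun k h1 h2 => by simp [hd', h1, h2]
  have hreg : Reg 1 D d' A a := by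
    intro m hm
    rcases (divs A a m).eq_empty_or_nonempty with h0 | ⟨i, hi⟩
    · simp [h0]
    rw [mem_divs] at hi
    refine (H.reg m hm).trans ?_
    have hm1 : m ∣ d j₁ := hi.2.trans (hall i hi.1)
    by_cases hmp : m ∣ d j₁ / p
    · refine card_le_card fun k hk => ?_
      rw [mem_divs] at hk ⊢
      refine ⟨hk.1, ?_⟩
      by_cases hky : k = y
      · subst hky
        rw [dy]
        exact hk.2.trans (Nat.dvd_lcm_left _ _)
      · by_cases hk1 : k = j₁
        · subst hk1
          rwa [d1]
        · rw [dk k hky hk1]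
          exact hk.2
    · have hpm := ordProj_dvd_of_not_dvd_div hp hd1 hpd hm1 hmp
      have hyL : m ∣ L := hi.2.trans ((Finset.dvd_lcm (mem_divs.mpr ⟨hi.1, hpm.trans hi.2⟩)).trans
        (Nat.dvd_lcm_right _ _))
      have hsub : insert y ((divs D d m).erase j₁) ⊆ divs D d' m := by
        intro k hk
        rw [mem_insert, mem_erase, mem_divs] at hk
        rw [mem_divs]
        by_cases hky : k = y
        · subst hky
          exact ⟨hy, by rwa [dy]⟩
        · rcases hk with hk | hk
          · exact absurd hk hky
          · rw [dk k hky hk.1]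
            exact hk.2
      have hyn : y ∉ (divs D d m).erase j₁ := by
        rw [mem_erase, mem_divs]
        rintro ⟨-, -, h⟩
        exact hpy (hpm.trans h)
      have hc := card_le_card hsub
      rw [card_insert_of_notMem hyn, card_erase_of_mem (mem_divs.mpr ⟨hj₁, hm1⟩)] at hc
      omega
  have hpos : ∀ j ∈ D, 0 < d' j := by
    intro k hk
    by_cases hky : k = y
    · subst hky; rwa [dy]
    · by_cases hk1 : k = j₁
      · subst hk1; rwa [d1]
      · rw [dk k hky hk1]; exact H.hd k hk
  have h := H.low d' hpos hreg
  have s1 := sum_update_add (Function.update d j₁ (d j₁ / p)) hy L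
  have s2 := sum_update_add d hj₁ (d j₁ / p)
  rw [Function.update_of_ne hne] at s1
  rw [← hd'] at s1
  omega

/-- If all weights divide `d j₁` and none divides `d y`, the sets of weights not dividing `d y` at a
given prime form a star. -/
theorem Minl.star (H : Minl D d A a) (hA : 4 ≤ #A) {j₁ y : ι} (hj₁ : j₁ ∈ D) (hy : y ∈ D)
    (hne : y ≠ j₁) (hall : ∀ i ∈ A, a i ∣ d j₁) (hnone : ∀ i ∈ A, ¬ a i ∣ d y) :
    ∃ z ∈ A, ∀ i ∈ A, i ≠ z → ∃ q, ¬ q ∣ 1 ∧ ¬ q ∣ d y ∧ divs A a q = {z, i} := by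
  have hd1 := H.hd j₁ hj₁
  have hdy := H.hd y hy
  have hndvd : ∀ p : ℕ, p.Prime → ¬ p ^ ((d y).factorization p + 1) ∣ d y := by
    intro p hp h
    rw [hp.pow_dvd_iff_le_factorization hdy.ne'] at h
    omega
  have hq1 : ∀ p : ℕ, p.Prime → ¬ p ^ ((d y).factorization p + 1) ∣ 1 := by
    intro p hp h
    rw [Nat.dvd_one, Nat.pow_eq_one] at h
    have := hp.one_lt
    omega
  suffices hs : ∃ z ∈ A, ∀ i ∈ A, i ≠ z →
      ∃ p ∈ {p : ℕ | p.Prime ∧ ¬ p ^ (d j₁).factorization p ∣ d y},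
        divs A a (p ^ ((d y).factorization p + 1)) = {z, i} by
    obtain ⟨z, hz, hstar⟩ := hs
    refine ⟨z, hz, fun i hi hiz => ?_⟩
    obtain ⟨p, ⟨hp, -⟩, hB⟩ := hstar i hi hiz
    exact ⟨_, hq1 p hp, hndvd p hp, hB⟩
  refine exists_star hA {p : ℕ | p.Prime ∧ ¬ p ^ (d j₁).factorization p ∣ d y}
    (fun p => divs A a (p ^ ((d y).factorization p + 1))) ?_ ?_ ?_ ?_
  · rintro p ⟨hp, -⟩
    have h1 := H.reg _ (hq1 p hp)
    have h2 : divs D d (p ^ ((d y).factorization p + 1)) ⊆ D.erase y := by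
      intro k hk
      rw [mem_divs] at hk
      rw [mem_erase]
      refine ⟨?_, hk.1⟩
      rintro rfl
      exact hndvd p hp hk.2
    have h3 := card_le_card h2
    rw [card_erase_of_mem hy] at h3
    have := H.card3
    show #(divs A a (p ^ ((d y).factorization p + 1))) ≤ 2
    omega
  · intro i hi
    have h := hnone i hi
    rw [Nat.dvd_iff_prime_pow_dvd_dvd] at h
    push Not at h
    obtain ⟨p, k, hp, hk, hkn⟩ := h
    have hk1 := (hp.pow_dvd_iff_le_factorization hd1.ne').mp (hk.trans (hall i hi))
    refine ⟨p, ⟨hp, fun h => hkn ((pow_dvd_pow p hk1).trans h)⟩, mem_divs.mpr ⟨hi, ?_⟩⟩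
    refine (pow_dvd_pow p ?_).trans hk
    rw [hp.pow_dvd_iff_le_factorization hdy.ne'] at hkn
    omega
  · intro p _
    exact divs_subset _ _ _
  · rintro p ⟨hp, hpy⟩ p' ⟨hp', hpy'⟩
    have hL := H.lcm_eq hj₁ hy hne hall hp hpy
    have hmono : ∀ p : ℕ, p.Prime → ¬ p ^ (d j₁).factorization p ∣ d y →
        p ^ ((d y).factorization p + 1) ∣ p ^ (d j₁).factorization p := by
      intro p hp hpy
      rw [hp.pow_dvd_iff_le_factorization hdy.ne'] at hpy
      exact pow_dvd_pow p (by omega)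
    have h1 : p' ^ (d j₁).factorization p' ∣
        (d y).lcm ((divs A a (p ^ (d j₁).factorization p)).lcm a) := by
      rw [hL]
      exact Nat.ordProj_dvd _ _
    rcases pow_dvd_lcm hp' h1 with h | h
    · exact absurd h hpy'
    · obtain ⟨i, hi, hid⟩ := pow_dvd_finset_lcm hp'
        (by intro h0; rw [h0, pow_zero] at hpy'; exact hpy' (one_dvd _)) h
      rw [mem_divs] at hi
      exact ⟨i, mem_divs.mpr ⟨hi.1, (hmono p hp hpy).trans hi.2⟩,
        mem_divs.mpr ⟨hi.1, (hmono p' hp' hpy').trans hid⟩⟩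

/-- In a minimal counterexample with three degrees, it is impossible that all weights divide one
degree and none divides another: the stars of the two other degrees share an edge, which gives
a modulus dividing two weights and at most one degree. -/
theorem Minl.not_single (H : Minl D d A a) (hD : #D = 3) {j₁ : ι} (hj₁ : j₁ ∈ D)
    (hall : ∀ i ∈ A, a i ∣ d j₁) (hnone : ∀ i ∈ A, ∀ j ∈ D, j ≠ j₁ → ¬ a i ∣ d j) : False := by
  have hA : 4 ≤ #A := by have := H.card; omega
  have h2 : #(D.erase j₁) = 2 := by rw [card_erase_of_mem hj₁, hD]
  obtain ⟨y, y', -, hyy⟩ := card_eq_two.mp h2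
  have hy : y ∈ D.erase j₁ := by simp [hyy]
  have hy' : y' ∈ D.erase j₁ := by simp [hyy]
  rw [mem_erase] at hy hy'
  obtain ⟨z, hz, hst⟩ := H.star hA hj₁ hy.2 hy.1 hall fun i hi => hnone i hi y hy.2 hy.1
  obtain ⟨z', hz', hst'⟩ := H.star hA hj₁ hy'.2 hy'.1 hall fun i hi => hnone i hi y' hy'.2 hy'.1
  obtain ⟨q, q', w, hwz, hq1, hqy, hqy', hB, hB'⟩ : ∃ q q' w, w ≠ z ∧ ¬ q ∣ 1 ∧ ¬ q ∣ d y ∧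
      ¬ q' ∣ d y' ∧ divs A a q = {z, w} ∧ divs A a q' = {z, w} := by
    by_cases hzz : z' = z
    · subst hzz
      obtain ⟨w, hw, hwz⟩ : ∃ w ∈ A, w ≠ z' := exists_mem_ne (by omega) z'
      obtain ⟨q, h1, h2, h3⟩ := hst w hw hwz
      obtain ⟨q', h1', h2', h3'⟩ := hst' w hw hwz
      exact ⟨q, q', w, hwz, h1, h2, h2', h3, h3'⟩
    · obtain ⟨q, h1, h2, h3⟩ := hst z' hz' hzz
      obtain ⟨q', h1', h2', h3'⟩ := hst' z hz (Ne.symm hzz)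
      exact ⟨q, q', z', hzz, h1, h2, h2', h3, by rw [h3', pair_comm]⟩
  have hr := H.reg (q.lcm q') fun h => hq1 ((Nat.dvd_lcm_left q q').trans h)
  rw [divs_lcm, hB, hB', inter_self, card_pair (Ne.symm hwz)] at hr
  have hsub : divs D d (q.lcm q') ⊆ {j₁} := by
    intro k hk
    rw [mem_divs, Nat.lcm_dvd_iff] at hk
    rw [mem_singleton]
    by_contra hkj
    have : k ∈ D.erase j₁ := mem_erase.mpr ⟨hkj, hk.1⟩
    rw [hyy] at this
    simp only [mem_insert, mem_singleton] at this
    rcases this with rfl | rfl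
    · exact hqy hk.2.1
    · exact hqy' hk.2.2
  have := card_le_card hsub
  rw [card_singleton] at this
  omega

/-- A choice of divisibilities `a i ∣ d (g i)` that misses at most one degree contains a matching. -/
theorem Minl.image_lt (H : Minl D d A a) (hc : #A = #D + 1) (g : κ → ι)
    (hg : ∀ i ∈ A, g i ∈ D ∧ a i ∣ d (g i)) : #(A.image g) + 1 < #D := by
  by_contra hlt
  apply H.ncov
  have hsub : A.image g ⊆ D := by
    intro j hj
    obtain ⟨i, hi, rfl⟩ := mem_image.mp hj
    exact (hg i hi).1
  obtain ⟨j₀, hj₀, hj⟩ : ∃ j₀ ∈ D, D \ A.image g ⊆ {j₀} := by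
    have h1 := card_sdiff_add_card_eq_card hsub
    obtain h | h : #(D \ A.image g) = 0 ∨ #(D \ A.image g) = 1 := by omega
    · have : 0 < #A := by omega
      obtain ⟨i, hi⟩ := card_pos.mp this
      exact ⟨g i, (hg i hi).1, by rw [card_eq_zero.mp h]; simp⟩
    · obtain ⟨x, hx⟩ := card_eq_one.mp h
      have hxD : x ∈ D \ A.image g := by simp [hx]
      exact ⟨x, (mem_sdiff.mp hxD).1, by rw [hx]⟩
  have hex : ∀ j ∈ D.erase j₀, ∃ i ∈ A, g i = j := by
    intro j hjD
    rw [mem_erase] at hjD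
    by_contra hn
    have : j ∈ D \ A.image g := by
      rw [mem_sdiff, mem_image]
      exact ⟨hjD.2, hn⟩
    exact hjD.1 (mem_singleton.mp (hj this))
  have hex' : ∀ j, ∃ i, j ∈ D.erase j₀ → i ∈ A ∧ g i = j := by
    intro j
    by_cases hj : j ∈ D.erase j₀
    · obtain ⟨i, hi⟩ := hex j hj
      exact ⟨i, fun _ => hi⟩
    · have : 0 < #A := by omega
      obtain ⟨i, hi⟩ := card_pos.mp this
      exact ⟨i, fun h => absurd h hj⟩
  choose f hf using hex'
  refine cov_of_matching H.hd (fun i hi => by have := H.ha i hi; omega) H.reg hc hj₀ f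
    (fun j hj => (hf j hj).1) (fun j hj => ?_) ?_
  · have := (hg (f j) (hf j hj).1).2
    rwa [(hf j hj).2] at this
  · intro j hj k hk hjk
    rw [← (hf j hj).2, ← (hf k hk).2, hjk]

theorem Minl.false_of_eq (H : Minl D d A a) (hc : #A = #D + 1) : False := by
  have hex : ∀ i, ∃ j, i ∈ A → j ∈ D ∧ a i ∣ d j := by
    intro i
    by_cases hi : i ∈ A
    · obtain ⟨j, hj⟩ := H.exists_dvd hi
      exact ⟨j, fun _ => hj⟩
    · have : 0 < #A := by omega
      obtain ⟨i', hi'⟩ := card_pos.mp this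
      obtain ⟨j, hj⟩ := H.exists_dvd hi'
      exact ⟨j, fun h => absurd h hi⟩
  choose g hg using hex
  have h1 := H.image_lt hc g hg
  have hpos : 0 < #(A.image g) := by
    rw [card_pos, image_nonempty, ← card_pos]
    omega
  have h3 := H.card3
  obtain ⟨j₁, hj₁⟩ := card_eq_one.mp (show #(A.image g) = 1 by omega)
  have hgj : ∀ i ∈ A, g i = j₁ := by
    intro i hi
    have := mem_image_of_mem g hi
    rwa [hj₁, mem_singleton] at this
  obtain ⟨i₀, hi₀⟩ := card_pos.mp (show 0 < #A by omega)
  have hj₁D : j₁ ∈ D := by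
    rw [← hgj i₀ hi₀]
    exact (hg i₀ hi₀).1
  refine H.not_single (by omega) hj₁D (fun i hi => ?_) fun i hi j hj hjne hdv => ?_
  · rw [← hgj i hi]
    exact (hg i hi).2
  · -- Redirecting the weight `i` to `j` produces a choice that hits two degrees.
    have h2 := H.image_lt hc (Function.update g i j) fun k hk => by
      by_cases hki : k = i
      · subst hki
        simpa using ⟨hj, hdv⟩
      · rw [Function.update_of_ne hki]
        exact hg k hk
    obtain ⟨i', hi', hne⟩ := exists_mem_ne (show 1 < #A by omega) i
    have hsub : {j, j₁} ⊆ A.image (Function.update g i j) := by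
      intro k hk
      simp only [mem_insert, mem_singleton] at hk
      rw [mem_image]
      rcases hk with rfl | rfl
      · exact ⟨i, hi, by simp⟩
      · exact ⟨i', hi', by rw [Function.update_of_ne hne, hgj i' hi']⟩
    have := card_le_card hsub
    rw [card_pair hjne] at this
    omega

/-- With a surplus of weights, every prime power exactly dividing the least weight `a b` divides a
degree below `2 * a b`. -/
theorem Minl.exists_small (H : Minl D d A a) (hc : #D + 1 < #A) {b : κ} (hb : b ∈ A) {p : ℕ}
    (hp : p.Prime) (hpb : p ∣ a b) :
    ∃ j ∈ D, p ^ (a b).factorization p ∣ d j ∧ d j < 2 * a b := by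
  have hb2 := H.ha b hb
  have hb0 : a b ≠ 0 := by omega
  set q := p ^ (a b).factorization p with hq
  have hpq : p ∣ q := dvd_pow_self p (hp.factorization_pos_of_dvd hb0 hpb).ne'
  have hq1 : ¬ q ∣ 1 := fun h => hp.one_lt.ne' (Nat.dvd_one.mp (hpq.trans h))
  by_contra hcon
  push Not at hcon
  have hreg' : Reg 1 D d (A.erase b) a := H.reg.mono (erase_subset _ _)
  have htight : ∀ j, ∃ m, j ∈ divs D d q → ¬ m ∣ 1 ∧ m ∣ d j ∧ q ∣ m ∧
      #(divs (A.erase b) a m) = #(divs D d m) := by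
    intro j
    by_cases hj : j ∈ divs D d q
    · rw [mem_divs] at hj
      have hpj : p ∣ d j := hpq.trans hj.2
      have h0 := H.hd j hj.1
      obtain ⟨m, h1, h2, h3, h4⟩ := exists_tight hreg' hj.1 h0 hp hpj fun hr => by
        have h2b := hcon j hj.1 hj.2
        have h2d : 2 * (d j / p) ≤ d j :=
          (Nat.mul_le_mul_right _ hp.two_le).trans (Nat.mul_div_le _ _)
        have h := H.drop hc b hb _ (fun k hk => ?_) hr
        · have := sum_update_add d hj.1 (d j / p)
          omega
        · by_cases hkj : k = j
          · subst hkj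
            rw [Function.update_self]
            exact Nat.div_pos (Nat.le_of_dvd h0 hpj) hp.pos
          · rw [Function.update_of_ne hkj]
            exact H.hd k hk
      refine ⟨m, fun _ => ⟨h1, h2, dvd_trans (pow_dvd_pow p ?_) h3, h4⟩⟩
      exact (hp.pow_dvd_iff_le_factorization h0.ne').mp hj.2
    · exact ⟨0, fun h => absurd h hj⟩
  choose m hm using htight
  have hbq : b ∈ divs A a q := mem_divs.mpr ⟨hb, Nat.ordProj_dvd _ _⟩
  have hcb : 0 < #(divs A a q) := card_pos.mpr ⟨b, hbq⟩
  refine no_system (J := divs D d q) (W := (divs A a q).erase b)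
    ((card_le_card (divs_subset _ _ _)).trans H.card3) ?_ (fun j => divs D d (m j))
    (fun j => divs (A.erase b) a (m j)) ?_ ?_ ?_ ?_ ?_
  · rw [card_erase_of_mem hbq]
    have := H.reg q hq1
    omega
  · intro j hj
    exact mem_divs.mpr ⟨(mem_divs.mp hj).1, (hm j hj).2.1⟩
  · intro j hj
    exact divs_anti _ _ (hm j hj).2.2.1
  · intro j hj i hi
    rw [mem_divs, mem_erase] at hi
    rw [mem_erase, mem_divs]
    exact ⟨hi.1.1, hi.1.2, (hm j hj).2.2.1.trans hi.2⟩
  · intro j hj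
    exact (hm j hj).2.2.2
  · intro j hj k hk
    rw [← divs_lcm, ← divs_lcm]
    exact hreg' _ fun h => (hm j hj).1 ((Nat.dvd_lcm_left _ _).trans h)

theorem Minl.false_of_lt (H : Minl D d A a) (hc : #D + 1 < #A) : False := by
  obtain ⟨b, hb, hmin⟩ := exists_min_image A a (card_pos.mp (show 0 < #A by omega))
  have hb2 := H.ha b hb
  have hsmall : ∀ i ∈ A, ∀ j ∈ D, d j < 2 * a b → ¬ a i ∣ d j := by
    intro i hi j hj hlt hdv
    have := H.two_mul_le hi hj hdv
    have := hmin i hi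
    omega
  obtain ⟨p, hp, hpb⟩ := Nat.exists_prime_and_dvd (show a b ≠ 1 by omega)
  obtain ⟨y, hy, -, hys⟩ := H.exists_small hc hb hp hpb
  obtain ⟨y', hy', hyne, hys'⟩ : ∃ y' ∈ D, y' ≠ y ∧ d y' < 2 * a b := by
    by_contra hcon
    push Not at hcon
    refine hsmall b hb y hy hys (dvd_of_pp fun r k hr hrk => ?_)
    rcases Nat.eq_zero_or_pos k with rfl | hk0
    · simp
    obtain ⟨y', hy', hdv, hlt⟩ := H.exists_small hc hb hr ((dvd_pow_self r hk0.ne').trans hrk)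
    have hyy : y' = y := by
      by_contra hne
      have := hcon y' hy' hne
      omega
    rw [hyy] at hdv
    exact (pow_dvd_pow r ((hr.pow_dvd_iff_le_factorization (by omega)).mp hrk)).trans hdv
  obtain ⟨j₁, hj₁, hbj⟩ := H.exists_dvd hb
  have hj1s : ¬ d j₁ < 2 * a b := fun h => hsmall b hb j₁ hj₁ h hbj
  have h1y : j₁ ≠ y := by rintro rfl; exact hj1s hys
  have h1y' : j₁ ≠ y' := by rintro rfl; exact hj1s hys'
  have hcard : #({j₁, y, y'} : Finset ι) = 3 :=
    card_eq_three.mpr ⟨j₁, y, y', h1y, h1y', Ne.symm hyne, rfl⟩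
  have hDeq : {j₁, y, y'} = D := by
    refine eq_of_subset_of_card_le ?_ (by rw [hcard]; exact H.card3)
    intro k hk
    simp only [mem_insert, mem_singleton] at hk
    rcases hk with rfl | rfl | rfl <;> assumption
  have hothers : ∀ j ∈ D, j ≠ j₁ → d j < 2 * a b := by
    intro j hj hne
    rw [← hDeq] at hj
    simp only [mem_insert, mem_singleton] at hj
    rcases hj with rfl | rfl | rfl
    · exact absurd rfl hne
    · exact hys
    · exact hys'
  refine H.not_single (by rw [← hDeq, hcard]) hj₁ (fun i hi => ?_)
    fun i hi j hj hne => hsmall i hi j hj (hothers j hj hne)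
  obtain ⟨j, hj, hdv⟩ := H.exists_dvd hi
  by_cases hjj : j = j₁
  · rwa [← hjj]
  · exact absurd hdv (hsmall i hi j hj (hothers j hj hjj))

/-- The bound for regular pairs, by induction on the sum `N` of the degrees. -/
theorem cov_one (N : ℕ) : ∀ (D : Finset ι) (d : ι → ℕ) (A : Finset κ) (a : κ → ℕ),
    ∑ j ∈ D, d j ≤ N → (∀ j ∈ D, 0 < d j) → (∀ i ∈ A, 2 ≤ a i) → Reg 1 D d A a → #D < #A →
    #D ≤ 3 → Cov 1 A a (deltaOn D d A a) := by
  induction N using Nat.strong_induction_on with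
  | _ N ih =>
  intro D d A a hN hd ha hreg hcard hcard3
  by_contra hncov
  have step : ∀ (D' : Finset ι) (d' : ι → ℕ) (A' : Finset κ), A' ⊆ A →
      ∑ j ∈ D', d' j < ∑ j ∈ D, d j → (∀ j ∈ D', 0 < d' j) → Reg 1 D' d' A' a → #D' < #A' →
      #D' ≤ 3 → deltaOn D d A a < deltaOn D' d' A' a := by
    intro D' d' A' hA' hlt hd' hreg' hc hc3
    by_contra hle
    exact hncov (Cov.mono hA' (not_lt.mp hle)
      (ih _ (lt_of_lt_of_le hlt hN) D' d' A' a le_rfl hd' (fun i hi => ha i (hA' hi)) hreg' hc hc3))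
  have H : Minl D d A a := by
    refine ⟨hd, ha, hreg, hcard, hcard3, hncov, ?_, ?_, ?_⟩
    · intro j hj i hi hji
      have hs := add_sum_erase D d hj
      have hs' := add_sum_erase A (fun i => (a i : ℤ)) hi
      have hs'' := add_sum_erase D (fun i => (d i : ℤ)) hj
      have h0 := hd j hj
      have h := step (D.erase j) d (A.erase i) (erase_subset _ _) (by omega)
        (fun k hk => hd k (mem_of_mem_erase hk)) ?_ ?_ ?_
      · simp only [deltaOn] at h
        simp only [hji] at hs''
        linarith
      · intro m hm
        have h1 := hreg m hm
        have e1 : divs (A.erase i) a m = (divs A a m).erase i := by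
          ext k; simp only [mem_divs, mem_erase]; tauto
        have e2 : divs (D.erase j) d m = (divs D d m).erase j := by
          ext k; simp only [mem_divs, mem_erase]; tauto
        rw [e1, e2]
        by_cases hmi : m ∣ a i
        · rw [card_erase_of_mem (mem_divs.mpr ⟨hi, hmi⟩),
            card_erase_of_mem (mem_divs.mpr ⟨hj, by rwa [hji]⟩)]
          omega
        · rw [erase_eq_of_notMem fun h => hmi (mem_divs.mp h).2,
            erase_eq_of_notMem fun h => hmi (by rw [← hji]; exact (mem_divs.mp h).2)]
          exact h1
      · rw [card_erase_of_mem hj, card_erase_of_mem hi]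
        have := card_pos.mpr ⟨j, hj⟩
        omega
      · rw [card_erase_of_mem hj]
        omega
    · intro d' hd' hreg'
      by_contra hlt
      have h := step D d' A subset_rfl (not_le.mp hlt) hd' hreg' hcard hcard3
      simp only [deltaOn] at h
      zify at hlt
      linarith
    · intro hc b hb d' hd' hreg'
      by_contra hlt
      have hb2 := ha b hb
      have hs' := add_sum_erase A (fun i => (a i : ℤ)) hb
      have h := step D d' (A.erase b) (erase_subset _ _) (by omega) hd' hreg'
        (by rw [card_erase_of_mem hb]; omega) hcard3
      simp only [deltaOn] at h
      zify at hlt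
      linarith
  rcases Nat.lt_or_ge (#D + 1) #A with h | h
  · exact H.false_of_lt h
  · exact H.false_of_eq (by omega)

end

/-! ### Raising a prime level and scaling -/

/-- Multiply by `p` the numbers whose `p`-adic valuation is exactly `s`. -/
def rho (p s x : ℕ) : ℕ := if p ^ s ∣ x ∧ ¬ p ^ (s + 1) ∣ x then p * x else x

theorem dvd_rho (p s x : ℕ) : x ∣ rho p s x := by
  unfold rho
  split_ifs
  · exact Dvd.intro_left _ rfl
  · exact dvd_rfl

theorem rho_pos {p s x : ℕ} (hp : p.Prime) (hx : 0 < x) : 0 < rho p s x := by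
  unfold rho
  split_ifs
  · exact Nat.mul_pos hp.pos hx
  · exact hx

/-- Divisibility of `rho p s x` by a number not dividing `h` is a divisibility of `x` by a (possibly
different) number not dividing `h`. -/
theorem exists_dvd_rho_iff {h p s m : ℕ} (hp : p.Prime) (hph : p ^ (s + 1) ∣ h) (hm : ¬ m ∣ h) :
    ∃ m', ¬ m' ∣ h ∧ ∀ x, m ∣ rho p s x ↔ m' ∣ x := by
  by_cases hcase : p ^ (s + 1) ∣ m ∧ ¬ p ^ (s + 2) ∣ m
  · obtain ⟨⟨e, rfl⟩, he⟩ := hcase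
    have hpe : ¬ p ∣ e := by
      rintro ⟨e', rfl⟩
      exact he ⟨e', by ring⟩
    have hcop : Nat.Coprime (p ^ (s + 1)) e := ((Nat.Prime.coprime_iff_not_dvd hp).mpr hpe).pow_left _
    refine ⟨p ^ s * e, fun hd => hm ?_, fun x => ?_⟩
    · exact hcop.mul_dvd_of_dvd_of_dvd hph ((Dvd.intro_left _ rfl).trans hd)
    · unfold rho
      split_ifs with hx
      · rw [show p ^ (s + 1) * e = p * (p ^ s * e) by ring, Nat.mul_dvd_mul_iff_left hp.pos]
      · refine ⟨fun hd => dvd_trans (mul_dvd_mul (pow_dvd_pow p (Nat.le_succ s)) dvd_rfl) hd,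
          fun hd => ?_⟩
        have h1 : p ^ s ∣ x := (Dvd.intro _ rfl).trans hd
        have h2 : p ^ (s + 1) ∣ x := by
          by_contra h2
          exact hx ⟨h1, h2⟩
        exact hcop.mul_dvd_of_dvd_of_dvd h2 ((Dvd.intro_left _ rfl).trans hd)
  · refine ⟨m, hm, fun x => ?_⟩
    unfold rho
    split_ifs with hx
    · refine ⟨fun hd => dvd_of_pp fun r k hr hrk => ?_, fun hd => hd.trans (Dvd.intro_left _ rfl)⟩
      have hrx : r ^ k ∣ p * x := hrk.trans hd
      by_cases hrp : r = p
      · subst hrp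
        refine (pow_dvd_pow r ?_).trans hx.1
        by_contra hk
        have h1 : r ^ (s + 1) ∣ m := (pow_dvd_pow r (by omega)).trans hrk
        have h2 : r ^ (s + 2) ∣ m := by
          by_contra h2
          exact hcase ⟨h1, h2⟩
        have h3 : r * r ^ (s + 1) ∣ r * x := by
          rw [← pow_succ']
          exact h2.trans hd
        exact hx.2 ((Nat.mul_dvd_mul_iff_left hr.pos).mp h3)
      · exact (((Nat.coprime_primes hr hp).mpr hrp).pow_left k).dvd_of_dvd_mul_left hrx
    · rfl

theorem sum_rho {κ : Type*} (A : Finset κ) (a : κ → ℕ) (p s : ℕ) :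
    ∑ i ∈ A, (rho p s (a i) : ℤ) = ∑ i ∈ A, (a i : ℤ) +
      ((p : ℤ) - 1) * ∑ i ∈ A with p ^ s ∣ a i ∧ ¬ p ^ (s + 1) ∣ a i, (a i : ℤ) := by
  rw [sum_filter, mul_sum, ← sum_add_distrib]
  refine sum_congr rfl fun i _ => ?_
  unfold rho
  split_ifs
  · push_cast; ring
  · ring

theorem Reg.rho {ι κ : Type*} {h p s : ℕ} {D : Finset ι} {d : ι → ℕ} {A : Finset κ} {a : κ → ℕ}
    (hr : Reg h D d A a) (hp : p.Prime) (hph : p ^ (s + 1) ∣ h) :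
    Reg h D (fun j => rho p s (d j)) A (fun i => rho p s (a i)) := by
  intro m hm
  obtain ⟨m', hm', hiff⟩ := exists_dvd_rho_iff hp hph hm
  simpa only [divs, hiff] using hr m' hm'

theorem Cov.of_rho {κ : Type*} {h p s : ℕ} {A : Finset κ} {a : κ → ℕ} {N : ℤ}
    (hc : Cov h A (fun i => rho p s (a i)) N) : Cov h A a N := by
  intro z hz hN
  obtain ⟨x, hx⟩ := hc z hz hN
  choose c hcd using fun i => dvd_rho p s (a i)
  refine ⟨fun i => x i * c i, ?_⟩
  rw [← hx]
  congr 1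
  refine sum_congr rfl fun i _ => ?_
  simp only [hcd i]
  ring

theorem gcd_lt_gcd_rho {h p s x : ℕ} (hh : 0 < h) (hph : p ^ (s + 1) ∣ h)
    (hx : p ^ s ∣ x ∧ ¬ p ^ (s + 1) ∣ x) : x.gcd h < (rho p s x).gcd h := by
  refine lt_of_le_of_ne (Nat.le_of_dvd (Nat.gcd_pos_of_pos_right _ hh)
    (Nat.gcd_dvd_gcd_of_dvd_left h (dvd_rho p s x))) fun heq => hx.2 ?_
  refine dvd_trans ?_ (Nat.gcd_dvd_left x h)
  rw [heq, rho, if_pos hx]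
  refine Nat.dvd_gcd ?_ hph
  rw [pow_succ']
  exact Nat.mul_dvd_mul_left p hx.1

/-- Scaling: the bound for `(d / m; a / m)` and `h / m` gives the bound for `(d; a)` and `h`. -/
theorem Cov.of_div {ι κ : Type*} {h m : ℕ} {D : Finset ι} {d : ι → ℕ} {A : Finset κ} {a : κ → ℕ}
    (hm : 0 < m) (hmh : m ∣ h) (hD : ∀ j ∈ D, m ∣ d j) (hA : ∀ i ∈ A, m ∣ a i)
    (hc : Cov (h / m) A (fun i => a i / m) (deltaOn D (fun j => d j / m) A (fun i => a i / m))) :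
    Cov h A a (deltaOn D d A a) := by
  obtain ⟨h', rfl⟩ := hmh
  rw [Nat.mul_div_cancel_left _ hm] at hc
  rintro _ ⟨w, rfl⟩ hN
  have hm' : (0 : ℤ) < m := by exact_mod_cast hm
  have e1 : ∑ j ∈ D, (d j : ℤ) = m * ∑ j ∈ D, ((d j / m : ℕ) : ℤ) := by
    rw [mul_sum]
    refine sum_congr rfl fun j hj => ?_
    rw [← Nat.cast_mul, Nat.mul_div_cancel' (hD j hj)]
  have e2 : ∑ i ∈ A, (a i : ℤ) = m * ∑ i ∈ A, ((a i / m : ℕ) : ℤ) := by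
    rw [mul_sum]
    refine sum_congr rfl fun j hj => ?_
    rw [← Nat.cast_mul, Nat.mul_div_cancel' (hA j hj)]
  obtain ⟨x, hx⟩ := hc (h' * w) (dvd_mul_right _ _) (by
    simp only [deltaOn] at hN ⊢
    rw [e1, e2, ← mul_sub, Nat.cast_mul, mul_assoc] at hN
    exact lt_of_mul_lt_mul_left hN hm'.le)
  refine ⟨x, ?_⟩
  rw [Nat.cast_mul, mul_assoc, ← hx, ← Nat.cast_mul, mul_sum]
  congr 1
  refine sum_congr rfl fun i hi => ?_
  rw [mul_left_comm, Nat.mul_div_cancel' (hA i hi)]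

theorem divs_div {κ : Type*} {A : Finset κ} {a : κ → ℕ} {m : ℕ} (hm : 0 < m)
    (hA : ∀ i ∈ A, m ∣ a i) (k : ℕ) : divs A (fun i => a i / m) k = divs A a (m * k) := by
  refine filter_congr fun i hi => ?_
  obtain ⟨e, he⟩ := hA i hi
  simp only
  rw [he, Nat.mul_div_cancel_left _ hm, Nat.mul_dvd_mul_iff_left hm]

/-! ### Reduction to regular pairs -/

/-- Level-by-level comparisons at a prime add up to a comparison of everything not divisible by a
prime power. -/
theorem sum_not_dvd_le {ι κ : Type*} {D : Finset ι} {d : ι → ℕ} {A : Finset κ} {a : κ → ℕ}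
    {h p : ℕ}
    (hlev : ∀ s, p ^ (s + 1) ∣ h → ∑ i ∈ A with p ^ s ∣ a i ∧ ¬ p ^ (s + 1) ∣ a i, a i ≤
      ∑ j ∈ D with p ^ s ∣ d j ∧ ¬ p ^ (s + 1) ∣ d j, d j) (k : ℕ) (hk : p ^ k ∣ h) :
    ∑ i ∈ A with ¬ p ^ k ∣ a i, a i ≤ ∑ j ∈ D with ¬ p ^ k ∣ d j, d j := by
  induction k with
  | zero => simp
  | succ k ih =>
    have key : ∀ x : ℕ, (if ¬ p ^ (k + 1) ∣ x then x else 0) =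
        (if ¬ p ^ k ∣ x then x else 0) + if p ^ k ∣ x ∧ ¬ p ^ (k + 1) ∣ x then x else 0 := by
      intro x
      have : p ^ (k + 1) ∣ x → p ^ k ∣ x := (pow_dvd_pow p (Nat.le_succ k)).trans
      split_ifs <;> omega
    rw [sum_filter, sum_filter, sum_congr rfl fun i _ => key (a i),
      sum_congr rfl fun j _ => key (d j), sum_add_distrib, sum_add_distrib, ← sum_filter,
      ← sum_filter, ← sum_filter, ← sum_filter]
    exact Nat.add_le_add (ih ((pow_dvd_pow p (Nat.le_succ k)).trans hk)) (hlev k hk)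

/-- An `h`-regular pair with at most three degrees is regular if at every prime power dividing `h` the
weights outside weigh at most as much as the degrees outside (`hpp`), while the opposite strict
inequality holds at every divisor of `h` that divides more weights than degrees (`hsub`). -/
theorem reg_one_of_balanced {ι κ : Type*} [DecidableEq ι] {D : Finset ι} {d : ι → ℕ} {A : Finset κ} {a : κ → ℕ} {h : ℕ}
    (ha : ∀ i ∈ A, 0 < a i) (hreg : Reg h D d A a) (hcard : #D < #A) (hcard3 : #D ≤ 3)
    (hpp : ∀ p k, p.Prime → p ^ k ∣ h →
      ∑ i ∈ A with ¬ p ^ k ∣ a i, a i ≤ ∑ j ∈ D with ¬ p ^ k ∣ d j, d j)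
    (hsub : ∀ m, m ∣ h → m ≠ 1 → #(divs D d m) < #(divs A a m) →
      ∑ j ∈ D with ¬ m ∣ d j, d j < ∑ i ∈ A with ¬ m ∣ a i, a i) :
    Reg 1 D d A a := by
  by_contra hnreg
  simp only [Reg, not_forall, not_le] at hnreg
  obtain ⟨m, hm1, hm⟩ := hnreg
  rw [Nat.dvd_one] at hm1
  have hmh : m ∣ h := by
    by_contra hn
    exact absurd (hreg m hn) (not_le.mpr hm)
  have hq : ∀ p k, p.Prime → k ≠ 0 → p ^ k ∣ m →
      #(divs D d m) = 0 ∧ #D = 3 ∧ #(divs D d (p ^ k)) = 2 := by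
    intro p k hp hk hkm
    have hkh := hkm.trans hmh
    have hq1 : p ^ k ≠ 1 := by
      rw [Ne, Nat.pow_eq_one]
      have := hp.one_lt
      omega
    have h1 : #(divs A a (p ^ k)) ≤ #(divs D d (p ^ k)) := by
      by_contra hn
      exact absurd (hpp p k hp hkh) (not_le.mpr (hsub _ hkh hq1 (not_le.mp hn)))
    have h2 : #(divs A a m) < #(divs A a (p ^ k)) := by
      by_contra hn
      have heq := eq_of_subset_of_card_le (divs_anti A a hkm) (not_lt.mp hn)
      have e1 := hsub m hmh hm1 hm
      have e2 := hpp p k hp hkh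
      have e3 : ∑ i ∈ A with ¬ m ∣ a i, a i = ∑ i ∈ A with ¬ p ^ k ∣ a i, a i := by
        refine sum_congr (filter_congr fun i hi => ?_) fun _ _ => rfl
        refine not_congr ⟨fun hh => hkm.trans hh, fun hh => ?_⟩
        have : i ∈ divs A a m := by
          rw [heq]
          exact mem_divs.mpr ⟨hi, hh⟩
        exact (mem_divs.mp this).2
      have e4 : ∑ j ∈ D with ¬ p ^ k ∣ d j, d j ≤ ∑ j ∈ D with ¬ m ∣ d j, d j :=
        sum_le_sum_of_subset fun j hj => by
          rw [mem_filter] at hj ⊢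
          exact ⟨hj.1, fun hh => hj.2 (hkm.trans hh)⟩
      omega
    have h3 : #(divs D d (p ^ k)) ≠ #D := by
      intro heq
      have hDe := eq_of_subset_of_card_le (divs_subset D d (p ^ k)) heq.ge
      have e2 := hpp p k hp hkh
      have e3 : ∑ j ∈ D with ¬ p ^ k ∣ d j, d j = 0 := by
        rw [filter_false_of_mem, sum_empty]
        intro j hj
        rw [← hDe] at hj
        exact not_not.mpr (mem_divs.mp hj).2
      rw [e3, Nat.le_zero, sum_eq_zero_iff] at e2
      have hAe : A ⊆ divs A a (p ^ k) := by
        intro i hi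
        rw [mem_divs]
        refine ⟨hi, ?_⟩
        by_contra hn
        exact (ha i hi).ne' (e2 i (mem_filter.mpr ⟨hi, hn⟩))
      have := card_le_card hAe
      omega
    have h4 := card_le_card (divs_subset D d (p ^ k))
    omega
  obtain ⟨p₀, hp₀, hp₀m⟩ := Nat.exists_prime_and_dvd hm1
  obtain ⟨hDm, hD3, -⟩ := hq p₀ 1 hp₀ one_ne_zero (by simpa using hp₀m)
  rw [card_eq_zero] at hDm
  -- For each degree pick a prime power dividing `m` that misses exactly that degree.
  have hex : ∀ j, ∃ q, j ∈ D → q ∣ m ∧ q ≠ 1 ∧ ¬ q ∣ d j ∧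
      ∑ i ∈ A with ¬ q ∣ a i, a i ≤ d j := by
    intro j
    by_cases hj : j ∈ D
    · have hmj : ¬ m ∣ d j := by
        intro hh
        have : j ∈ divs D d m := mem_divs.mpr ⟨hj, hh⟩
        simp [hDm] at this
      rw [Nat.dvd_iff_prime_pow_dvd_dvd] at hmj
      push Not at hmj
      obtain ⟨p, k, hp, hk, hkn⟩ := hmj
      have hk0 : k ≠ 0 := by
        rintro rfl
        simp at hkn
      obtain ⟨-, -, h2⟩ := hq p k hp hk0 hk
      refine ⟨p ^ k, fun _ => ⟨hk, ?_, hkn, (hpp p k hp (hk.trans hmh)).trans ?_⟩⟩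
      · rw [Ne, Nat.pow_eq_one]
        have := hp.one_lt
        omega
      · have hsplit := card_filter_add_card_filter_not (s := D) (fun j => p ^ k ∣ d j)
        change #(divs D d (p ^ k)) + _ = _ at hsplit
        obtain ⟨j', hj'⟩ := card_eq_one.mp
          (show #(D.filter fun j => ¬ p ^ k ∣ d j) = 1 by omega)
        have : j ∈ D.filter fun j => ¬ p ^ k ∣ d j := mem_filter.mpr ⟨hj, hkn⟩
        rw [hj'] at this ⊢
        rw [mem_singleton] at this
        rw [sum_singleton, this]
    · exact ⟨0, fun hh => absurd hh hj⟩
  choose q hqj using hex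
  have hm'm : D.lcm q ∣ m := Finset.lcm_dvd fun j hj => (hqj j hj).1
  have hD0 : ∀ j ∈ D, ¬ D.lcm q ∣ d j := fun j hj hh => (hqj j hj).2.2.1 ((dvd_lcm hj).trans hh)
  have hm'1 : D.lcm q ≠ 1 := by
    obtain ⟨j, hj⟩ := card_pos.mp (show 0 < #D by omega)
    intro h1
    exact (hqj j hj).2.1 (Nat.dvd_one.mp (h1 ▸ dvd_lcm hj))
  have hDe : divs D d (D.lcm q) = ∅ := filter_false_of_mem hD0
  have hlt := hsub _ (hm'm.trans hmh) hm'1 (by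
    rw [hDe, card_empty]
    exact lt_of_lt_of_le (by omega) (card_le_card (divs_anti A a hm'm)))
  rw [filter_true_of_mem hD0] at hlt
  have hle : ∑ i ∈ A with ¬ D.lcm q ∣ a i, a i ≤ ∑ j ∈ D, ∑ i ∈ A with ¬ q j ∣ a i, a i := by
    simp only [sum_filter]
    rw [sum_comm]
    refine sum_le_sum fun i _ => ?_
    by_cases hi : D.lcm q ∣ a i
    · rw [if_neg (not_not.mpr hi)]
      exact Nat.zero_le _
    · rw [if_pos hi]
      obtain ⟨j, hj, hji⟩ : ∃ j ∈ D, ¬ q j ∣ a i := by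
        by_contra hcon
        push Not at hcon
        exact hi (Finset.lcm_dvd hcon)
      calc a i = if ¬ q j ∣ a i then a i else 0 := by rw [if_pos hji]
        _ ≤ _ := single_le_sum (f := fun j => if ¬ q j ∣ a i then a i else 0)
          (fun _ _ => Nat.zero_le _) hj
  have := sum_le_sum fun j hj => (hqj j hj).2.2.2
  omega

theorem deltaOn_divs_le {ι κ : Type*} {D : Finset ι} {d : ι → ℕ} {A : Finset κ} {a : κ → ℕ} {m : ℕ}
    (h : ∑ i ∈ A with ¬ m ∣ a i, a i ≤ ∑ j ∈ D with ¬ m ∣ d j, d j) :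
    deltaOn (divs D d m) d (divs A a m) a ≤ deltaOn D d A a := by
  have h1 := sum_filter_add_sum_filter_not D (fun j => m ∣ d j) (fun j => (d j : ℤ))
  have h2 := sum_filter_add_sum_filter_not A (fun j => m ∣ a j) (fun j => (a j : ℤ))
  have h3 : ∑ i ∈ A with ¬ m ∣ a i, (a i : ℤ) ≤ ∑ j ∈ D with ¬ m ∣ d j, (d j : ℤ) := by
    exact_mod_cast h
  simp only [deltaOn, divs]
  linarith

/-- The bound for `h`-regular pairs, by induction on `h`, then on the size of the pair, then on the
total deficit `∑ (h - gcd (a i, h))` of the weights. -/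
theorem cov_main {ι κ : Type*} [DecidableEq ι] [DecidableEq κ] (h : ℕ) : ∀ (D : Finset ι) (d : ι → ℕ) (A : Finset κ) (a : κ → ℕ), 0 < h →
    (∀ j ∈ D, 0 < d j) → (∀ i ∈ A, 0 < a i) → (∀ i ∈ A, ¬ a i ∣ h) → Reg h D d A a → #D < #A →
    #D ≤ 3 → Cov h A a (deltaOn D d A a) := by
  induction h using Nat.strong_induction_on with
  | _ h ihh =>
  intro D d A a
  induction hN : #A + #D using Nat.strong_induction_on generalizing D d A a with
  | _ N ihN =>
  induction hM : ∑ i ∈ A, (h - (a i).gcd h) using Nat.strong_induction_on generalizing d a with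
  | _ M ihM =>
  intro hh hd ha hnd hreg hcard hcard3
  by_contra hncov
  -- No prime level can be raised.
  have hlev : ∀ p s, p.Prime → p ^ (s + 1) ∣ h →
      ∑ i ∈ A with p ^ s ∣ a i ∧ ¬ p ^ (s + 1) ∣ a i, a i ≤
      ∑ j ∈ D with p ^ s ∣ d j ∧ ¬ p ^ (s + 1) ∣ d j, d j := by
    intro p s hp hph
    by_contra hlt
    push Not at hlt
    have hc := ihM (∑ i ∈ A, (h - (rho p s (a i)).gcd h)) ?_ (fun j => rho p s (d j))
      (fun i => rho p s (a i)) rfl hh (fun j hj => rho_pos hp (hd j hj))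
      (fun i hi => rho_pos hp (ha i hi)) (fun i hi hh => hnd i hi ((dvd_rho _ _ _).trans hh))
      (hreg.rho hp hph) hcard hcard3
    -- Raising the level does not increase the amplitude, and it enlarges some `gcd (a i, h)`.
    · refine hncov (Cov.mono subset_rfl ?_ hc.of_rho)
      simp only [deltaOn, sum_rho]
      have hp1 : (0 : ℤ) ≤ (p : ℤ) - 1 := by have := hp.one_lt; omega
      have hlt' : ∑ j ∈ D with p ^ s ∣ d j ∧ ¬ p ^ (s + 1) ∣ d j, (d j : ℤ) ≤
          ∑ i ∈ A with p ^ s ∣ a i ∧ ¬ p ^ (s + 1) ∣ a i, (a i : ℤ) := by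
        exact_mod_cast hlt.le
      linarith [mul_le_mul_of_nonneg_left hlt' hp1]
    · rw [← hM]
      obtain ⟨i, hi⟩ := nonempty_of_sum_ne_zero (Nat.ne_of_gt (lt_of_le_of_lt (Nat.zero_le _) hlt))
      rw [mem_filter] at hi
      refine sum_lt_sum (fun k _ => Nat.sub_le_sub_left ?_ h) ⟨i, hi.1, ?_⟩
      · exact Nat.le_of_dvd (Nat.gcd_pos_of_pos_right _ hh)
          (Nat.gcd_dvd_gcd_of_dvd_left h (dvd_rho p s (a k)))
      · have h1 := gcd_lt_gcd_rho hh hph hi.2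
        have h2 := Nat.gcd_le_right (rho p s (a i)) hh
        omega
  -- No proper subpair suffices, and no common factor of the whole pair divides `h`.
  have hsub : ∀ m, m ∣ h → m ≠ 1 → #(divs D d m) < #(divs A a m) →
      ∑ j ∈ D with ¬ m ∣ d j, d j < ∑ i ∈ A with ¬ m ∣ a i, a i := by
    intro m hmh hm1 hc
    by_contra hle
    have hA := card_le_card (divs_subset A a m)
    have hD := card_le_card (divs_subset D d m)
    have hm0 : 0 < m := Nat.pos_of_dvd_of_pos hmh hh
    by_cases hlt : #(divs A a m) + #(divs D d m) < N
    · refine hncov (Cov.mono (divs_subset A a m) (deltaOn_divs_le (not_lt.mp hle))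
        (ihN _ hlt _ d _ a rfl hh (fun j hj => hd j (divs_subset _ _ _ hj))
        (fun i hi => ha i (divs_subset _ _ _ hi)) (fun i hi => hnd i (divs_subset _ _ _ hi)) ?_ hc
        (hD.trans hcard3)))
      intro k hk
      have hr := hreg (m.lcm k) fun hh' => hk ((Nat.dvd_lcm_right m k).trans hh')
      have e1 : divs (divs A a m) a k = divs A a (m.lcm k) := by
        ext i; simp only [mem_divs, Nat.lcm_dvd_iff]; tauto
      have e2 : divs (divs D d m) d k = divs D d (m.lcm k) := by
        ext i; simp only [mem_divs, Nat.lcm_dvd_iff]; tauto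
      rwa [e1, e2]
    · have hAe := eq_of_subset_of_card_le (divs_subset A a m) (by omega)
      have hDe := eq_of_subset_of_card_le (divs_subset D d m) (by omega)
      have hAm : ∀ i ∈ A, m ∣ a i := fun i hi => by
        rw [← hAe] at hi
        exact (mem_divs.mp hi).2
      have hDm : ∀ j ∈ D, m ∣ d j := fun j hj => by
        rw [← hDe] at hj
        exact (mem_divs.mp hj).2
      refine hncov (Cov.of_div hm0 hmh hDm hAm (ihh (h / m) (Nat.div_lt_self hh (by omega)) D _ A _
        (Nat.div_pos (Nat.le_of_dvd hh hmh) hm0)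
        (fun j hj => Nat.div_pos (Nat.le_of_dvd (hd j hj) (hDm j hj)) hm0)
        (fun i hi => Nat.div_pos (Nat.le_of_dvd (ha i hi) (hAm i hi)) hm0) ?_ ?_ hcard hcard3))
      · intro i hi hdv
        apply hnd i hi
        rw [← Nat.mul_div_cancel' hmh, ← Nat.mul_div_cancel' (hAm i hi)]
        exact Nat.mul_dvd_mul_left m hdv
      · intro k hk
        rw [divs_div hm0 hAm, divs_div hm0 hDm]
        refine hreg _ fun hdv => hk ?_
        rw [← Nat.mul_div_cancel' hmh] at hdv
        exact (Nat.mul_dvd_mul_iff_left hm0).mp hdv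
  have hreg1 := reg_one_of_balanced ha hreg hcard hcard3
    (fun p k hp hk => sum_not_dvd_le (fun s hs => hlev p s hp hs) k hk) hsub
  have ha2 : ∀ i ∈ A, 2 ≤ a i := by
    intro i hi
    have h0 := ha i hi
    have h1 : a i ≠ 1 := fun h1 => hnd i hi (by rw [h1]; exact one_dvd h)
    omega
  refine hncov fun z _ hz => cov_one _ D d A a le_rfl hd ha2 hreg1 hcard hcard3 z ?_ hz
  simp

end FrobBound

/-- **Corollary (codimension at most 3).**
If `(d;a) = (d₁,…,d_c; a₀,…,aₙ)` is an `h`-regular pair with `c ≤ 3`, `c ≤ n`, and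
`aᵢ ∤ h` for all `i`, then `δ(d;a) ≥ F^h(a₀,…,aₙ)`. -/
theorem frobenius_bound_codim_le_three (h c n : ℕ) (hh : 0 < h) (hc1 : 1 ≤ c)
    (hc3 : c ≤ 3) (hcn : c ≤ n)
    (d : Fin c → ℕ) (a : Fin (n + 1) → ℕ)
    (hd : ∀ j, 0 < d j) (ha : ∀ i, 0 < a i)
    (hreg : IsHRegularPair h d a) (hnd : ∀ i, ¬ a i ∣ h) :
    deltaPair d a ≥ frobNum h a := by
  have hgcd_pos : ∀ I : Finset (Fin (n + 1)), I.Nonempty → 0 < I.gcd a := by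
    rintro I ⟨i, hi⟩
    exact Nat.pos_of_dvd_of_pos (gcd_dvd hi) (ha i)
  have hregm : FrobBound.Reg h univ d univ a := by
    intro m hm
    rcases (FrobBound.divs univ a m).eq_empty_or_nonempty with h0 | hne
    · simp [h0]
    have hmg : m ∣ (FrobBound.divs univ a m).gcd a :=
      dvd_gcd fun i hi => (FrobBound.mem_divs.mp hi).2
    have hg0 := hgcd_pos _ hne
    have hg1 : (FrobBound.divs univ a m).gcd a ≠ 1 := fun h1 =>
      hm ((Nat.dvd_one.mp (h1 ▸ hmg)) ▸ one_dvd h)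
    rcases hreg _ (subset_univ _) hne (by omega) with ⟨P, -, hP, hPd⟩ | hdv
    · rw [← hP]
      exact card_le_card fun j hj => FrobBound.mem_divs.mpr ⟨mem_univ j, hmg.trans (hPd j hj)⟩
    · exact absurd (hmg.trans hdv) hm
  -- There are too few degrees to match all weights, so the gcd of the weights divides `h`.
  have hgh : univ.gcd a ∣ h := by
    by_contra hn
    have h1 := hregm _ hn
    rw [FrobBound.divs, filter_true_of_mem fun i hi => gcd_dvd hi] at h1
    have h2 := card_le_card (FrobBound.divs_subset univ d (univ.gcd a))
    simp only [card_univ, Fintype.card_fin] at h1 h2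
    omega
  have hcov := FrobBound.cov_main h univ d univ a hh (fun j _ => hd j) (fun i _ => ha i)
    (fun i _ => hnd i) hregm (by simp; omega) (by simpa using hc3)
  have hlcm : Nat.lcm (univ.gcd a) h = h := Nat.lcm_eq_right hgh
  rw [ge_iff_le, frobNum, frobOn, hlcm]
  refine csSup_le ⟨-(h : ℤ), by simp, ?_⟩ ?_
  · rintro ⟨x, hx⟩
    have : (0 : ℤ) ≤ ((∑ i, x i * a i : ℕ) : ℤ) := Int.natCast_nonneg _
    omega
  · rintro z ⟨hz, hnz⟩
    by_contra hlt
    exact hnz (hcov z hz (not_le.mp hlt))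
end

section
/- Suppose that for every regular pair (d;a) = (d_1,…,d_c; a_0,…,a_n) with c ≤ 3, c ≤ n and all weights a_i ≠ 1, one has δ(d;a) ≥ F(a_0,…,a_n). Then for every positive integer h and every h-regular pair (d;a) = (d_1,…,d_c; a_0,…,a_n) with c ≤ 3, c ≤ n and a_i ∤ h for all i, one has δ(d;a) ≥ F^h(a_0,…,a_n). (Hence Conjecture 1.2 and its h-regular generalisation are equivalent for pairs of codimension at most 3.) -/
/-!
For `q : ℕ` write `A_q`, `D_q` for the sets of indices of weights, resp. degrees, divisible by `q`.
On positive weights, `h`-regularity says exactly that `#A_q ≤ #D_q` for every `q ∤ h`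
(`isHRegularPair_iff`).
In this form two reductions are available.

* *Dividing by a prime* `p ∣ h`: replace `h` by `h / p` and divide by `p` exactly those weights and
  degrees that are divisible by `p`. Regularity is preserved (`DivRegular.reduce`), and a
  representation of `z / p` by the new weights gives one of `z` by the old ones
  (`exists_rep_of_reduce`). The amplitude bound is preserved as soon as the degrees prime to `p`
  have at most the same sum as the weights prime to `p` (`mul_deltaOn_reduce_le`).
* *Restricting to the multiples of* `r ∣ h`: the subpair `(D_r; A_r)` is again `h`-regular
  (`DivRegular.multIdx`). It has smaller codimension if `D_r ≠ D`, and its amplitude is at most that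
  of the whole pair as soon as the discarded degrees have at least the sum of the discarded
  weights.

The proof is by induction on `h + c` (`exists_rep_of_divRegular`). If the pair is not already
`1`-regular, some `q > 1` dividing `h` has `#A_q > #D_q ≥ 1`. If the first reduction fails for a
prime `p ∣ q`, the degrees prime to `p` have larger sum than the weights prime to `p`; in particular
`D_p ≠ D`. If moreover `#A_p > #D_p`, the second reduction applies with `r = p`. Otherwise
`1 ≤ #D_q < #A_q ≤ #A_p ≤ #D_p < c ≤ 3`, which forces `A_q = A_p`, so the inequality between
the discarded degrees and weights passes from `p` to `q`, and the second reduction applies with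
`r = q`. Apart from applying the hypothesis on regular pairs, this is the only use of `c ≤ 3`.
-/


open Finset

/-! ### The two reductions and the induction -/

section Reductions

variable {ι κ : Type*}

/-- The indices in `A` whose value under `a` is a multiple of `q`. -/
def multIdx (A : Finset κ) (a : κ → ℕ) (q : ℕ) : Finset κ := A.filter (fun i => q ∣ a i)

/-- The reformulation of `h`-regularity by counting multiples: each `q ∤ h` divides at least as many
degrees as weights. -/
def DivRegular (h : ℕ) (D : Finset ι) (d : ι → ℕ) (A : Finset κ) (a : κ → ℕ) : Prop :=
  ∀ q, ¬ q ∣ h → (multIdx A a q).card ≤ (multIdx D d q).card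

/-- Divide by `p` the values that are multiples of `p`, and keep the others. -/
def reduceBy (p : ℕ) (a : κ → ℕ) (i : κ) : ℕ := if p ∣ a i then a i / p else a i

lemma mem_multIdx {A : Finset κ} {a : κ → ℕ} {q : ℕ} {i : κ} :
    i ∈ multIdx A a q ↔ i ∈ A ∧ q ∣ a i := by
  simp [multIdx]

lemma multIdx_subset (A : Finset κ) (a : κ → ℕ) (q : ℕ) : multIdx A a q ⊆ A :=
  filter_subset _ _

lemma multIdx_mono (A : Finset κ) (a : κ → ℕ) {p q : ℕ} (h : p ∣ q) :
    multIdx A a q ⊆ multIdx A a p := by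
  intro i
  simp only [mem_multIdx]
  exact fun hi => ⟨hi.1, h.trans hi.2⟩

lemma multIdx_multIdx (A : Finset κ) (a : κ → ℕ) (q r : ℕ) :
    multIdx (multIdx A a r) a q = multIdx A a (Nat.lcm q r) := by
  ext i
  simp only [mem_multIdx, Nat.lcm_dvd_iff]
  tauto

lemma DivRegular.multIdx {h : ℕ} {D : Finset ι} {d : ι → ℕ} {A : Finset κ} {a : κ → ℕ}
    (H : DivRegular h D d A a) (r : ℕ) :
    DivRegular h (multIdx D d r) d (multIdx A a r) a := by
  intro q hq
  rw [multIdx_multIdx, multIdx_multIdx]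
  exact H _ fun hl => hq ((Nat.dvd_lcm_left q r).trans hl)

lemma reduceBy_pos {p : ℕ} (hp : p.Prime) {a : κ → ℕ} {i : κ} (ha : 0 < a i) :
    0 < reduceBy p a i := by
  unfold reduceBy
  split_ifs with h
  · exact Nat.div_pos (Nat.le_of_dvd ha h) hp.pos
  · exact ha

lemma dvd_reduceBy_iff {p : ℕ} (hp : p.Prime) (q : ℕ) (a : κ → ℕ) (i : κ) :
    q ∣ reduceBy p a i ↔ (if p ∣ q then p * q else q) ∣ a i := by
  unfold reduceBy
  by_cases hpa : p ∣ a i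
  · obtain ⟨m, hm⟩ := hpa
    simp only [hm, dvd_mul_right, if_true, Nat.mul_div_cancel_left _ hp.pos]
    by_cases hpq : p ∣ q
    · simp only [hpq, if_true]
      exact (Nat.mul_dvd_mul_iff_left hp.pos).symm
    · simp only [hpq, if_false]
      exact ((Nat.Coprime.symm ((Nat.Prime.coprime_iff_not_dvd hp).2 hpq)).dvd_mul_left).symm
  · simp only [hpa, if_false]
    by_cases hpq : p ∣ q
    · simp only [hpq, if_true]
      exact ⟨fun h => absurd (hpq.trans h) hpa,
        fun h => absurd ((dvd_mul_right p q).trans h) hpa⟩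
    · simp only [hpq, if_false]

lemma DivRegular.reduce {p h : ℕ} (hp : p.Prime) {D : Finset ι} {d : ι → ℕ} {A : Finset κ}
    {a : κ → ℕ} (H : DivRegular (p * h) D d A a) :
    DivRegular h D (reduceBy p d) A (reduceBy p a) := by
  intro q hq
  simp only [_root_.multIdx, dvd_reduceBy_iff hp]
  refine H _ fun hl => hq ?_
  split_ifs at hl with hpq
  · exact (Nat.mul_dvd_mul_iff_left hp.pos).1 hl
  · exact (Nat.Coprime.symm ((Nat.Prime.coprime_iff_not_dvd hp).2 hpq)).dvd_of_dvd_mul_left hl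

lemma not_reduceBy_dvd {p h : ℕ} {a : κ → ℕ} {i : κ} (hi : ¬ a i ∣ p * h) :
    ¬ reduceBy p a i ∣ h := by
  intro hd
  apply hi
  unfold reduceBy at hd
  split_ifs at hd with hpa
  · rw [← Nat.mul_div_cancel' hpa]
    exact Nat.mul_dvd_mul_left p hd
  · exact hd.trans (dvd_mul_left h p)

lemma exists_rep_of_reduce {p : ℕ} {A : Finset κ} {a : κ → ℕ} {z : ℤ}
    (hz : ∃ x : κ → ℕ, ((∑ i ∈ A, x i * reduceBy p a i : ℕ) : ℤ) = z) :
    ∃ x : κ → ℕ, ((∑ i ∈ A, x i * a i : ℕ) : ℤ) = p * z := by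
  obtain ⟨x, rfl⟩ := hz
  refine ⟨fun i => if p ∣ a i then x i else p * x i, ?_⟩
  norm_cast
  rw [mul_sum]
  refine sum_congr rfl fun i _ => ?_
  unfold reduceBy
  by_cases hpa : p ∣ a i
  · simp only [hpa, if_true]
    rw [mul_left_comm, Nat.mul_div_cancel' hpa]
  · simp only [hpa, if_false]
    ring

/-- A representation by some of the weights is one by all of them, with zero coefficients on the
remaining ones. -/
lemma exists_rep_of_subset {A B : Finset κ} (hBA : B ⊆ A) {a : κ → ℕ} {z : ℤ}
    (hz : ∃ x : κ → ℕ, ((∑ i ∈ B, x i * a i : ℕ) : ℤ) = z) :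
    ∃ x : κ → ℕ, ((∑ i ∈ A, x i * a i : ℕ) : ℤ) = z := by
  classical
  obtain ⟨x, rfl⟩ := hz
  refine ⟨fun i => if i ∈ B then x i else 0, ?_⟩
  simp only [ite_mul, zero_mul]
  rw [sum_ite_mem, inter_eq_right.2 hBA]

/-- The sum of the values that are not multiples of `q`. -/
def restSum (A : Finset κ) (a : κ → ℕ) (q : ℕ) : ℤ := ∑ i ∈ A with ¬ q ∣ a i, (a i : ℤ)

lemma sum_multIdx_add_restSum (A : Finset κ) (a : κ → ℕ) (q : ℕ) :
    ∑ i ∈ multIdx A a q, (a i : ℤ) + restSum A a q = ∑ i ∈ A, (a i : ℤ) :=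
  sum_filter_add_sum_filter_not A (fun i => q ∣ a i) fun i => (a i : ℤ)

lemma restSum_nonneg (A : Finset κ) (a : κ → ℕ) (q : ℕ) : 0 ≤ restSum A a q :=
  sum_nonneg fun _ _ => Int.natCast_nonneg _

lemma restSum_mono (A : Finset κ) (a : κ → ℕ) {p q : ℕ} (h : p ∣ q) :
    restSum A a p ≤ restSum A a q := by
  refine sum_le_sum_of_subset_of_nonneg (fun i => ?_) fun _ _ _ => Int.natCast_nonneg _
  simp only [mem_filter]
  exact fun hi => ⟨hi.1, fun hq => hi.2 (h.trans hq)⟩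

lemma restSum_eq_of_multIdx_eq {A : Finset κ} {a : κ → ℕ} {p q : ℕ}
    (h : multIdx A a p = multIdx A a q) : restSum A a p = restSum A a q := by
  have hp := sum_multIdx_add_restSum A a p
  have hq := sum_multIdx_add_restSum A a q
  rw [h] at hp
  linarith

lemma mul_sum_reduceBy (p : ℕ) (A : Finset κ) (a : κ → ℕ) :
    (p : ℤ) * ∑ i ∈ A, (reduceBy p a i : ℤ) =
      ∑ i ∈ A, (a i : ℤ) + (p - 1) * restSum A a p := by
  rw [restSum, sum_filter, mul_sum, mul_sum, ← sum_add_distrib]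
  refine sum_congr rfl fun i _ => ?_
  unfold reduceBy
  split_ifs with hpa
  · have : (p : ℤ) * ((a i / p : ℕ) : ℤ) = a i := by
      exact_mod_cast Nat.mul_div_cancel' hpa
    rw [this, mul_zero, add_zero]
  · ring

lemma mul_deltaOn_reduce_le {p : ℕ} (hp : p.Prime) {D : Finset ι} {d : ι → ℕ} {A : Finset κ}
    {a : κ → ℕ} (hle : restSum D d p ≤ restSum A a p) :
    (p : ℤ) * deltaOn D (reduceBy p d) A (reduceBy p a) ≤ deltaOn D d A a := by
  have h1 : (1 : ℤ) ≤ p := by exact_mod_cast hp.one_le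
  unfold deltaOn
  rw [mul_sub, mul_sum_reduceBy, mul_sum_reduceBy]
  nlinarith

lemma deltaOn_multIdx_le {r : ℕ} {D : Finset ι} {d : ι → ℕ} {A : Finset κ} {a : κ → ℕ}
    (hle : restSum A a r ≤ restSum D d r) :
    deltaOn (multIdx D d r) d (multIdx A a r) a ≤ deltaOn D d A a := by
  have h1 := sum_multIdx_add_restSum A a r
  have h2 := sum_multIdx_add_restSum D d r
  unfold deltaOn
  linarith

/-- The induction carrying the argument: if every `1`-regular pair indexed by finite subsets of
`ι` and `κ` satisfies the Frobenius bound, so does every `h`-regular one. The bound is phrased for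
integers `z`, not just natural numbers, so that it also yields `δ ≥ -h`. -/
theorem exists_rep_of_divRegular
    (H : ∀ (D : Finset ι) (A : Finset κ) (d : ι → ℕ) (a : κ → ℕ),
      1 ≤ D.card → D.card ≤ 3 → D.card < A.card →
      (∀ j ∈ D, 0 < d j) → (∀ i ∈ A, 0 < a i) → DivRegular 1 D d A a → (∀ i ∈ A, a i ≠ 1) →
      ∀ z : ℤ, deltaOn D d A a < z → ∃ x : κ → ℕ, ((∑ i ∈ A, x i * a i : ℕ) : ℤ) = z)
    (N : ℕ) :
    ∀ (h : ℕ) (D : Finset ι) (A : Finset κ) (d : ι → ℕ) (a : κ → ℕ), h + D.card ≤ N → 0 < h →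
      1 ≤ D.card → D.card ≤ 3 → D.card < A.card →
      (∀ j ∈ D, 0 < d j) → (∀ i ∈ A, 0 < a i) → DivRegular h D d A a → (∀ i ∈ A, ¬ a i ∣ h) →
      ∀ z : ℤ, (h : ℤ) ∣ z → deltaOn D d A a < z →
        ∃ x : κ → ℕ, ((∑ i ∈ A, x i * a i : ℕ) : ℤ) = z := by
  induction N with
  | zero => intro h D A d a hN hh; omega
  | succ N ih =>
    intro h D A d a hN hh hD1 hD3 hDA hd ha hreg hah z hz hlt
    by_cases hreg1 : DivRegular 1 D d A a
    · exact H D A d a hD1 hD3 hDA hd ha hreg1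
        (fun i hi h1 => hah i hi (h1 ▸ one_dvd h)) z hlt
    -- The second reduction: restrict to the multiples of `r`, when this leaves fewer degrees than
    -- weights, fewer degrees than before, and at least as large a discarded sum of degrees as of
    -- weights.
    have key : ∀ r : ℕ, 1 ≤ (multIdx D d r).card → (multIdx D d r).card < (multIdx A a r).card →
        (multIdx D d r).card < D.card → restSum A a r ≤ restSum D d r →
        ∃ x : κ → ℕ, ((∑ i ∈ A, x i * a i : ℕ) : ℤ) = z := by
      intro r h1 h2 h3 h4
      refine exists_rep_of_subset (multIdx_subset A a r) ?_
      exact ih h (multIdx D d r) (multIdx A a r) d a (by omega) hh h1 (by omega) h2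
        (fun j hj => hd j (multIdx_subset _ _ _ hj)) (fun i hi => ha i (multIdx_subset _ _ _ hi))
        (hreg.multIdx r) (fun i hi => hah i (multIdx_subset _ _ _ hi)) z hz
        ((deltaOn_multIdx_le h4).trans_lt hlt)
    unfold DivRegular at hreg1
    push Not at hreg1
    obtain ⟨q, hq1, hq⟩ := hreg1
    have hq1' : q ≠ 1 := fun h => hq1 h.dvd
    have hqh : q ∣ h := by
      by_contra hc
      exact absurd (hreg q hc) (not_le.2 hq)
    -- A weight divisible by `q` does not divide `h`, so it divides some degree.
    have hDq : 1 ≤ (multIdx D d q).card := by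
      obtain ⟨i, hi⟩ := card_pos.1 (Nat.zero_lt_of_lt hq)
      rw [mem_multIdx] at hi
      have h1 : 1 ≤ (multIdx A a (a i)).card :=
        card_pos.2 ⟨i, mem_multIdx.2 ⟨hi.1, dvd_rfl⟩⟩
      exact (h1.trans (hreg _ (hah i hi.1))).trans (card_le_card (multIdx_mono D d hi.2))
    obtain ⟨p, hp, hpq⟩ := Nat.exists_prime_and_dvd hq1'
    have hDpq := card_le_card (multIdx_mono D d hpq)
    have hApq := card_le_card (multIdx_mono A a hpq)
    by_cases hle : restSum D d p ≤ restSum A a p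
    · obtain ⟨h', rfl⟩ := hpq.trans hqh
      obtain ⟨w, rfl⟩ := hz
      have hh' : 0 < h' := Nat.pos_of_mul_pos_left hh
      have h2h : 2 * h' ≤ p * h' := Nat.mul_le_mul_right _ hp.two_le
      have hp0 : (0 : ℤ) < p := by exact_mod_cast hp.pos
      rw [Nat.cast_mul, mul_assoc] at hlt ⊢
      refine exists_rep_of_reduce ?_
      refine ih h' D A (reduceBy p d) (reduceBy p a) (by omega) hh' hD1 hD3 hDA
        (fun j hj => reduceBy_pos hp (hd j hj)) (fun i hi => reduceBy_pos hp (ha i hi))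
        (hreg.reduce hp) (fun i hi => not_reduceBy_dvd (hah i hi)) _ (dvd_mul_right _ _) ?_
      exact lt_of_mul_lt_mul_left ((mul_deltaOn_reduce_le hp hle).trans_lt hlt) hp0.le
    · rw [not_le] at hle
      have hDp : (multIdx D d p).card < D.card := by
        refine card_lt_card ((multIdx_subset D d p).ssubset_of_ne fun heq => ?_)
        have h1 := sum_multIdx_add_restSum D d p
        have h2 := restSum_nonneg A a p
        rw [heq] at h1
        linarith
      by_cases hAp : (multIdx D d p).card < (multIdx A a p).card
      · exact key p (by omega) hAp hDp hle.le
      · have hA : multIdx A a q = multIdx A a p :=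
          eq_of_subset_of_card_le (multIdx_mono A a hpq) (by omega)
        refine key q hDq hq (by omega) ?_
        rw [restSum_eq_of_multIdx_eq hA]
        exact hle.le.trans (restSum_mono D d hpq)

end Reductions

/-! ### Regularity and Frobenius numbers in terms of divisibility counts and representations -/

section Translation

lemma isHRegularPair_iff {ι κ : Type*} [Fintype ι] [Fintype κ] {h : ℕ} {d : ι → ℕ}
    {a : κ → ℕ} (ha : ∀ i, 0 < a i) : IsHRegularPair h d a ↔ DivRegular h univ d univ a := by
  constructor
  · intro H q hq
    rcases (multIdx univ a q).eq_empty_or_nonempty with h0 | hne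
    · simp [h0]
    have hqg : q ∣ (multIdx univ a q).gcd a := dvd_gcd fun i hi => (mem_multIdx.1 hi).2
    have hgh : ¬ (multIdx univ a q).gcd a ∣ h := fun hc => hq (hqg.trans hc)
    have hg0 : (multIdx univ a q).gcd a ≠ 0 := by
      obtain ⟨i, hi⟩ := hne
      intro hc
      exact (ha i).ne' (Finset.gcd_eq_zero_iff.1 hc i hi)
    have hg1 : (multIdx univ a q).gcd a ≠ 1 := fun hc => hgh (hc ▸ one_dvd h)
    rcases H _ (subset_univ _) hne (by omega) with ⟨P, -, hcard, hP⟩ | hc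
    · rw [← hcard]
      exact card_le_card fun j hj => mem_multIdx.2 ⟨mem_univ _, hqg.trans (hP j hj)⟩
    · exact absurd hc hgh
  · intro H I _ _ _
    by_cases hc : I.gcd a ∣ h
    · exact Or.inr hc
    left
    have h1 : I.card ≤ (multIdx univ a (I.gcd a)).card :=
      card_le_card fun i hi => mem_multIdx.2 ⟨mem_univ _, gcd_dvd hi⟩
    obtain ⟨P, hP, hcard⟩ := exists_subset_card_eq (h1.trans (H _ hc))
    exact ⟨P, subset_univ _, hcard, fun j hj => (mem_multIdx.1 (hP hj)).2⟩

/-- With fewer degrees than weights, the gcd of all the weights divides `h`. -/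
lemma DivRegular.gcd_dvd {ι κ : Type*} {h : ℕ} {D : Finset ι} {d : ι → ℕ} {A : Finset κ}
    {a : κ → ℕ} (H : DivRegular h D d A a) (hlt : D.card < A.card) : A.gcd a ∣ h := by
  by_contra hc
  have h1 : A.card ≤ (_root_.multIdx A a (A.gcd a)).card :=
    card_le_card fun i hi => mem_multIdx.2 ⟨hi, Finset.gcd_dvd hi⟩
  have h2 := card_le_card (multIdx_subset D d (A.gcd a))
  have h3 := H _ hc
  omega

lemma exists_forall_rep {κ : Type*} [Fintype κ] {a : κ → ℕ} (hg : univ.gcd a = 1) :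
    ∃ n : ℕ, ∀ m ≥ n, ∃ x : κ → ℕ, ∑ i, x i * a i = m := by
  obtain ⟨n, hn⟩ := Nat.exists_mem_closure_of_ge (Set.range a)
  refine ⟨n, fun m hm => ?_⟩
  have h1 : Nat.setGcd (Set.range a) ∣ m := by
    have : Nat.setGcd (Set.range a) ∣ univ.gcd a :=
      Finset.dvd_gcd fun i _ => Nat.setGcd_dvd_of_mem ⟨i, rfl⟩
    exact (this.trans hg.dvd).trans (one_dvd m)
  have h2 := hn m hm h1
  rw [← Submodule.span_nat_eq_addSubmonoidClosure, Submodule.mem_toAddSubmonoid,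
    Submodule.mem_span_range_iff_exists_fun] at h2
  simpa only [smul_eq_mul] using h2

/-- Coprimality makes the set in the definition of `F` bounded above, so that its `sSup` is not a
junk value. -/
lemma exists_rep_of_frobNum_lt {κ : Type*} [Fintype κ] {a : κ → ℕ} (hg : univ.gcd a = 1)
    {z : ℤ} (hz : frobNum 1 a < z) : ∃ x : κ → ℕ, ((∑ i, x i * a i : ℕ) : ℤ) = z := by
  obtain ⟨n, hn⟩ := exists_forall_rep hg
  by_contra hc
  have hmem : z ∈ {z : ℤ | ((Nat.lcm (univ.gcd a) 1 : ℕ) : ℤ) ∣ z ∧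
      ¬ ∃ x : κ → ℕ, ((∑ i, x i * a i : ℕ) : ℤ) = z} := ⟨by simp [hg], hc⟩
  refine absurd (le_csSup ⟨(n : ℤ), ?_⟩ hmem) (not_le.2 hz)
  rintro w ⟨-, hw⟩
  by_contra hlt
  rw [not_le] at hlt
  obtain ⟨x, hx⟩ := hn w.toNat (by omega)
  exact hw ⟨x, by rw [hx]; omega⟩

lemma frobNum_le {κ : Type*} [Fintype κ] {h : ℕ} (hh : 0 < h) {a : κ → ℕ}
    (hg : univ.gcd a ∣ h) {B : ℤ}
    (H : ∀ z : ℤ, (h : ℤ) ∣ z → B < z → ∃ x : κ → ℕ, ((∑ i, x i * a i : ℕ) : ℤ) = z) :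
    frobNum h a ≤ B := by
  unfold frobNum frobOn
  rw [Nat.lcm_eq_right hg]
  refine csSup_le ⟨-h, ⟨by simp, ?_⟩⟩ ?_
  · rintro ⟨x, hx⟩
    omega
  · rintro z ⟨hz, hrep⟩
    by_contra hc
    exact hrep (H z hz (not_le.1 hc))

lemma exists_map_univ_eq {κ : Type*} (A : Finset κ) {n : ℕ} (hn : A.card = n) :
    ∃ f : Fin n ↪ κ, univ.map f = A := by
  refine ⟨(A.equivFinOfCardEq hn).symm.toEmbedding.trans (Function.Embedding.subtype _), ?_⟩
  ext i
  simp only [mem_map, mem_univ, true_and, Function.Embedding.trans_apply]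
  constructor
  · rintro ⟨k, rfl⟩
    exact ((A.equivFinOfCardEq hn).symm k).2
  · intro hi
    exact ⟨A.equivFinOfCardEq hn ⟨i, hi⟩, by simp⟩

lemma card_multIdx_map {κ κ' : Type*} [Fintype κ'] (f : κ' ↪ κ) (a : κ → ℕ) (q : ℕ) :
    (multIdx (univ.map f) a q).card = (multIdx univ (a ∘ f) q).card := by
  rw [multIdx, filter_map, card_map]
  rfl

end Translation

/-- **Corollary 4.12 (equivalence of the regular and `h`-regular conjectures in
codimension at most 3).**  If `δ(d;a) ≥ F(a₀,…,aₙ)` holds for every regular pair with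
`c ≤ 3`, `c ≤ n` and all weights `≠ 1`, then `δ(d;a) ≥ F^h(a₀,…,aₙ)` holds for every
positive integer `h` and every `h`-regular pair with `c ≤ 3`, `c ≤ n` and `aᵢ ∤ h`
for all `i`. -/
theorem conjectures_equivalent_codim_le_three
    (H : ∀ (c n : ℕ), 1 ≤ c → c ≤ 3 → c ≤ n →
      ∀ (d : Fin c → ℕ) (a : Fin (n + 1) → ℕ),
        (∀ j, 0 < d j) → (∀ i, 0 < a i) → IsHRegularPair 1 d a → (∀ i, a i ≠ 1) →
        deltaPair d a ≥ frobNum 1 a) :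
    ∀ (h c n : ℕ), 0 < h → 1 ≤ c → c ≤ 3 → c ≤ n →
      ∀ (d : Fin c → ℕ) (a : Fin (n + 1) → ℕ),
        (∀ j, 0 < d j) → (∀ i, 0 < a i) → IsHRegularPair h d a → (∀ i, ¬ a i ∣ h) →
        deltaPair d a ≥ frobNum h a := by
  intro h c n hh hc1 hc3 hcn d a hd ha hreg hah
  rw [isHRegularPair_iff ha] at hreg
  have hcard : (univ : Finset (Fin c)).card < (univ : Finset (Fin (n + 1))).card := by
    simp only [card_univ, Fintype.card_fin]
    omega
  refine frobNum_le hh (hreg.gcd_dvd hcard) fun z hz hlt => ?_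
  refine exists_rep_of_divRegular ?_ _ h univ univ d a le_rfl hh (by simpa) (by simpa) hcard
    (fun j _ => hd j) (fun i _ => ha i) hreg (fun i _ => hah i) z hz hlt
  -- The hypothesis on pairs indexed by `Fin` is transported to subsets of the index types.
  clear! z a d
  intro D A d a hD1 hD3 hDA hd ha hreg ha1 z hlt
  obtain ⟨m, hm⟩ : ∃ m, A.card = m + 1 := ⟨A.card - 1, by omega⟩
  obtain ⟨k, hk⟩ : ∃ k, D.card = k := ⟨_, rfl⟩
  rw [hk] at hD1 hD3 hDA
  obtain ⟨f, rfl⟩ := exists_map_univ_eq A hm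
  obtain ⟨e, rfl⟩ := exists_map_univ_eq D hk
  have ha' : ∀ i, 0 < (a ∘ f) i := fun i => ha _ (mem_map_of_mem f (mem_univ i))
  have hreg' : DivRegular 1 univ (d ∘ e) univ (a ∘ f) := by
    intro q hq
    rw [← card_multIdx_map, ← card_multIdx_map]
    exact hreg q hq
  have hg : univ.gcd (a ∘ f) = 1 := by
    refine Nat.dvd_one.1 (hreg'.gcd_dvd ?_)
    simp only [card_univ, Fintype.card_fin]
    omega
  have hF := H k m hD1 hD3 (by omega) (d ∘ e) (a ∘ f)
    (fun j => hd _ (mem_map_of_mem e (mem_univ j))) ha' ((isHRegularPair_iff ha').2 hreg')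
    (fun i => ha1 _ (mem_map_of_mem f (mem_univ i)))
  have hδ : deltaPair (d ∘ e) (a ∘ f) = deltaOn (univ.map e) d (univ.map f) a := by
    simp [deltaPair, deltaOn, sum_map]
  obtain ⟨x, hx⟩ := exists_rep_of_frobNum_lt hg (lt_of_le_of_lt (hF.trans_eq hδ) hlt)
  refine ⟨Function.extend f x 0, ?_⟩
  rw [← hx, sum_map]
  simp [f.injective.extend_apply]
end
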